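/- arXiv:1410.5970 — 3 statements merged into one kernel-verified Lean document; each statement's English description precedes it below -/
import Mathlib

section
/- Let W > 0 and let (d_i)_{i≥1} be real numbers with d_i ≥ W·i for all i ≥ 1. Then for every absolutely summable real sequence x = (x_1, x_2, …), Σ_{k≥1} k·|x_k| ≤ (2/W) · Σ_{i≥1} d_i |Σ_{j≥i} x_j| (where both sides may equal +∞). -/
open scoped ENNReal

/-!
With the tails `t i = Σ_{j ≥ i} x j`, one has `x k = t k - t (k + 1)`, so
`(k + 1) |x k| ≤ (k + 1) |t k| + (k + 2) |t (k + 1)|`. Summing over `k` bounds the left side by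
`2 Σ_i (i + 1) |t i|`, and `i + 1 ≤ d i / W` finishes.
-/

/-- If `W > 0` and `d_i ≥ W i` for all `i ≥ 1`, then for every absolutely
summable sequence `x = (x_1, x_2, …)`,
`Σ_{k≥1} k |x_k| ≤ (2/W) Σ_{i≥1} d_i |Σ_{j≥i} x_j|` (both sides may be `+∞`).
Here index `i : ℕ` encodes the paper's index `i + 1 ≥ 1`. -/
theorem l1E_le_norm1D_div_W
    (W : ℝ) (hW : 0 < W)
    (d : ℕ → ℝ) (hd : ∀ i : ℕ, W * ((i : ℝ) + 1) ≤ d i)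
    (x : ℕ → ℝ) (hx : Summable fun k => |x k|) :
    ∑' k : ℕ, ENNReal.ofReal (((k : ℝ) + 1) * |x k|) ≤
      ENNReal.ofReal (2 / W) * ∑' i : ℕ, ENNReal.ofReal (d i * |∑' j : ℕ, x (i + j)|) := by
  have tail_sub (k : ℕ) : x k = (∑' j : ℕ, x (k + j)) - ∑' j : ℕ, x (k + 1 + j) := by
    have hs : Summable fun j => x (k + j) :=
      hx.of_abs.comp_injective (add_right_injective k)
    have h := hs.tsum_eq_zero_add
    simp only [add_zero, ← add_assoc, add_right_comm k _ 1] at h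
    linarith
  set t : ℕ → ℝ := fun i => ∑' j : ℕ, x (i + j) with ht
  set f : ℕ → ℝ≥0∞ := fun i => ENNReal.ofReal (((i : ℝ) + 1) * |t i|) with hf
  have le_tails (k : ℕ) : ENNReal.ofReal (((k : ℝ) + 1) * |x k|) ≤ f k + f (k + 1) := by
    simp only [hf]
    rw [← ENNReal.ofReal_add (by positivity) (by positivity)]
    apply ENNReal.ofReal_le_ofReal
    have h : |x k| ≤ |t k| + |t (k + 1)| := by
      rw [tail_sub k]
      exact abs_sub (t k) (t (k + 1))
    push_cast
    nlinarith [abs_nonneg (t (k + 1)), mul_le_mul_of_nonneg_left h (by positivity : (0 : ℝ) ≤ k + 1)]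
  have le_weight (i : ℕ) :
      2 * f i ≤ ENNReal.ofReal (2 / W) * ENNReal.ofReal (d i * |t i|) := by
    have h2 : (2 : ℝ≥0∞) = ENNReal.ofReal 2 := by simp
    simp only [hf]
    rw [h2, ← ENNReal.ofReal_mul (by norm_num), ← ENNReal.ofReal_mul (by positivity)]
    apply ENNReal.ofReal_le_ofReal
    calc 2 * (((i : ℝ) + 1) * |t i|) = 2 / W * (W * ((i : ℝ) + 1) * |t i|) := by field_simp
      _ ≤ 2 / W * (d i * |t i|) := by gcongr; exact hd i
  calc ∑' k : ℕ, ENNReal.ofReal (((k : ℝ) + 1) * |x k|)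
      ≤ ∑' k, (f k + f (k + 1)) := ENNReal.tsum_le_tsum le_tails
    _ = ∑' k, f k + ∑' k, f (k + 1) := ENNReal.tsum_add
    _ ≤ ∑' k, f k + ∑' k, f k :=
        add_le_add le_rfl (ENNReal.tsum_comp_le_tsum_of_injective (add_left_injective 1) f)
    _ = ∑' k, 2 * f k := by rw [ENNReal.tsum_mul_left, two_mul]
    _ ≤ ∑' i, ENNReal.ofReal (2 / W) * ENNReal.ofReal (d i * |t i|) :=
        ENNReal.tsum_le_tsum le_weight
    _ = _ := ENNReal.tsum_mul_left
end

section
/- Assume the M_t|M_t|S specialization with ζ := inf_{n≥1} ζ_n > 0, and suppose there exists ε > 0 such that ∫₀^∞ (ζ·ξ(t) − ε·λ(t)) dt = +∞. Then the queue-length process is weakly ergodic, and for every k ∈ ℕ the solutions p with p(0) = e_k and π with π(0) = e_0 satisfy ‖p(t) − π(t)‖ ≤ 4(1+ε)^k ε^{−1} · exp(−∫₀ᵗ (ζ·ξ(τ) − ε·λ(τ)) dτ) for all t ≥ 0. -/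
/-! The `ℓ¹`-distance of two solutions `p`, `q` contracts at the rate `a = ζ ξ(t)`, a common lower
bound for all catastrophe rates. Put `d = p - q`, so `∑ d_i = 0`. Subtracting
`a · (∑ d_i) = 0` from the equation for `d_0` splits the generator as `A' - a I`, where `A'` still
has nonnegative off-diagonal entries and zero column sums, whence `(∑ |d_i|)' ≤ -a ∑ |d_i|`.

Made rigorous: for fixed `N`, the function `exp (∫ a) ∑_{i ≤ N} |d_i|` is absolutely continuous,
and `sum_sign_mul_KRHS_le` bounds its derivative by the tail `2 L exp (∫ a) ∑_{i > N} |d_i|`,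
since the flows inside `{0, …, N}` cancel. The integral of the tail tends to `0` by dominated
convergence, which gives `kol_contraction`: `‖d(t)‖ ≤ ‖d(0)‖ exp (-∫ a)`.

As `ζ ξ ≥ ζ ξ - ε λ`, this implies weak ergodicity, and also the explicit bound, since
`‖e_0 - e_0‖ = 0` and, for `k ≥ 1`, `‖e_k - e_0‖ ≤ 2 ≤ 4 (1 + ε) ^ k / ε`. -/

open MeasureTheory Filter Topology Real

/-- Right-hand side of the forward Kolmogorov system for a
birth-death process with catastrophes, with birth rates `lam`, death rates `mu`
and catastrophe rates `xi`. -/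
noncomputable def KRHS (lam mu xi : ℕ → ℝ → ℝ) (p : ℝ → ℕ → ℝ) (t : ℝ) : ℕ → ℝ
  | 0 => -lam 0 t * p t 0 + mu 1 t * p t 1 + ∑' k : ℕ, xi (k + 1) t * p t (k + 1)
  | (k + 1) =>
      lam k t * p t k - (lam (k + 1) t + mu (k + 1) t + xi (k + 1) t) * p t (k + 1) +
        mu (k + 2) t * p t (k + 2)

/-- `p` is a solution of the forward Kolmogorov system: `p t` is a stochastic vector for
every `t ≥ 0`, and each coordinate is absolutely continuous with a.e. derivative given by
the system (expressed in the equivalent integral form). -/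
structure IsKolSolution (lam mu xi : ℕ → ℝ → ℝ) (p : ℝ → ℕ → ℝ) : Prop where
  nonneg : ∀ t : ℝ, 0 ≤ t → ∀ i : ℕ, 0 ≤ p t i
  sum_one : ∀ t : ℝ, 0 ≤ t → HasSum (p t) 1
  integrable : ∀ i : ℕ, ∀ t : ℝ, 0 ≤ t →
    IntervalIntegrable (fun τ => KRHS lam mu xi p τ i) volume 0 t
  eqn : ∀ i : ℕ, ∀ t : ℝ, 0 ≤ t →
    p t i = p 0 i + ∫ τ in (0:ℝ)..t, KRHS lam mu xi p τ i

/-- The standing hypotheses on the intensity functions: measurable, nonnegative on `[0,∞)`,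
essentially bounded by `L` there, and `μ₀ ≡ 0`. -/
structure KolRates (L : ℝ) (lam mu xi : ℕ → ℝ → ℝ) : Prop where
  posL : 0 < L
  meas_lam : ∀ k, Measurable (lam k)
  meas_mu : ∀ k, Measurable (mu k)
  meas_xi : ∀ k, Measurable (xi k)
  rates_nonneg : ∀ k, ∀ t : ℝ, 0 ≤ t → 0 ≤ lam k t ∧ 0 ≤ mu k t ∧ 0 ≤ xi k t
  rates_bdd : ∀ k, ∀ᵐ t : ℝ ∂volume, 0 ≤ t → lam k t ≤ L ∧ mu k t ≤ L ∧ xi k t ≤ L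
  mu_zero : ∀ t : ℝ, mu 0 t = 0

/-- The stochastic vector with `1` in coordinate `k`. -/
def eVec (k : ℕ) : ℕ → ℝ := fun i => if i = k then 1 else 0

/-- The mean `E_p(t) = Σ_{k≥1} k p_k(t)` of a solution at time `t`. -/
noncomputable def Emean (p : ℝ → ℕ → ℝ) (t : ℝ) : ℝ := ∑' k : ℕ, (k : ℝ) * p t k
/-- Arrival rates of the `M_t|M_t|S` queue: `λ_k(t) = λ(t)`. -/
noncomputable def mmsLam (lam0 : ℝ → ℝ) : ℕ → ℝ → ℝ := fun _ t => lam0 t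

/-- Service rates of the `M_t|M_t|S` queue: `μ_k(t) = min(k,S) μ(t)`. -/
noncomputable def mmsMu (S : ℕ) (mu0 : ℝ → ℝ) : ℕ → ℝ → ℝ :=
  fun k t => ((min k S : ℕ) : ℝ) * mu0 t

/-- Catastrophe rates of the `M_t|M_t|S` queue: `ξ_k(t) = ζ_k ξ(t)`. -/
noncomputable def mmsXi (zeta : ℕ → ℝ) (xi0 : ℝ → ℝ) : ℕ → ℝ → ℝ :=
  fun k t => zeta k * xi0 t

/-! ### Absolutely continuous functions -/

theorem ac_of_abs_sub_le {f g : ℝ → ℝ} {a b : ℝ} (C : ℝ)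
    (hf : AbsolutelyContinuousOnInterval f a b)
    (h : ∀ x ∈ Set.uIcc a b, ∀ y ∈ Set.uIcc a b, |g x - g y| ≤ C * |f x - f y|) :
    AbsolutelyContinuousOnInterval g a b := by
  have h1 := Filter.Tendsto.const_mul C hf
  rw [mul_zero] at h1
  refine squeeze_zero' (Eventually.of_forall fun E => ?_) ?_ h1
  · exact Finset.sum_nonneg fun i _ => dist_nonneg
  · have : ∀ᶠ E in AbsolutelyContinuousOnInterval.totalLengthFilter ⊓
        𝓟 (AbsolutelyContinuousOnInterval.disjWithin a b),
        E ∈ AbsolutelyContinuousOnInterval.disjWithin a b :=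
      eventually_inf_principal.2 (Eventually.of_forall fun _ h => h)
    filter_upwards [this] with E hE
    rw [Finset.mul_sum]
    refine Finset.sum_le_sum fun i hi => ?_
    rw [Real.dist_eq, Real.dist_eq]
    exact h _ (hE.1 i hi).1 _ (hE.1 i hi).2

theorem ac_finset_sum {f : ℕ → ℝ → ℝ} {a b : ℝ} (s : Finset ℕ)
    (hf : ∀ i, AbsolutelyContinuousOnInterval (f i) a b) :
    AbsolutelyContinuousOnInterval (fun t => ∑ i ∈ s, f i t) a b := by
  induction s using Finset.induction_on with
  | empty => exact ac_of_abs_sub_le 0 (hf 0) (by simp)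
  | insert i s hi ih =>
    simp only [Finset.sum_insert hi]
    exact (hf i).add ih

/-- At a zero of `x` the function `|x|` has a minimum, so if it is differentiable there its
derivative vanishes, which agrees with the convention `sign 0 = 0`. -/
theorem deriv_abs_eq_sign_mul {x : ℝ → ℝ} {x' t : ℝ} (hx : HasDerivAt x x' t)
    (hd : DifferentiableAt ℝ (fun τ => |x τ|) t) :
    HasDerivAt (fun τ => |x τ|) (SignType.sign (x t) * x') t := by
  by_cases h : x t = 0
  · have : IsLocalMin (fun τ => |x τ|) t := Eventually.of_forall fun τ => by simp [h]
    have h0 := hd.hasDerivAt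
    rw [this.deriv_eq_zero] at h0
    simpa [h] using h0
  · exact (hasDerivAt_abs h).comp t hx

/-! ### Pointwise estimates for the right-hand side -/

theorem KRHS_succ (lam mu xi : ℕ → ℝ → ℝ) (p : ℝ → ℕ → ℝ) (t : ℝ) (k : ℕ) :
    KRHS lam mu xi p t (k + 1) =
      lam k t * p t k - (lam (k + 1) t + mu (k + 1) t + xi (k + 1) t) * p t (k + 1) +
        mu (k + 2) t * p t (k + 2) := rfl

theorem KRHS_zero (lam mu xi : ℕ → ℝ → ℝ) (p : ℝ → ℕ → ℝ) (t : ℝ) :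
    KRHS lam mu xi p t 0 =
      -lam 0 t * p t 0 + mu 1 t * p t 1 + ∑' k : ℕ, xi (k + 1) t * p t (k + 1) := rfl

theorem KRHS_sub {lam mu xi : ℕ → ℝ → ℝ} {p q : ℝ → ℕ → ℝ} {t L : ℝ}
    (hxi : ∀ k, 0 ≤ xi k t ∧ xi k t ≤ L)
    (hp : Summable (p t)) (hq : Summable (q t))
    (hp0 : ∀ i, 0 ≤ p t i) (hq0 : ∀ i, 0 ≤ q t i) (i : ℕ) :
    KRHS lam mu xi p t i - KRHS lam mu xi q t i =
      KRHS lam mu xi (fun s j => p s j - q s j) t i := by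
  have key : ∀ r : ℕ → ℝ, Summable r → (∀ i, 0 ≤ r i) →
      Summable fun k => xi (k + 1) t * r (k + 1) := fun r hr hr0 =>
    Summable.of_nonneg_of_le (fun k => mul_nonneg (hxi _).1 (hr0 _))
      (fun k => mul_le_mul_of_nonneg_right (hxi _).2 (hr0 _))
      (((summable_nat_add_iff 1).2 hr).mul_left L)
  cases i with
  | zero =>
    simp only [KRHS_zero, mul_sub]
    rw [(key _ hp hp0).tsum_sub (key _ hq hq0)]
    ring
  | succ k => simp only [KRHS_succ]; ring

set_option maxHeartbeats 1000000 in
/-- The derivative of `∑_{i ≤ N} |d_i|` plus `a ∑_{i ≤ N} |d_i|` is controlled by the tail of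
`∑ |d_i|`. Since `∑ d_i = 0`, the term `a d_0` turns the catastrophe rates `ξ_k` in the equation
for `d_0` into `ξ_k - a ≥ 0`; after that the flows between the states `0, …, N` cancel in the sum
and only the flow across the boundary `N | N + 1` and the catastrophes from above `N` remain. -/
theorem sum_sign_mul_KRHS_le {lam mu xi : ℕ → ℝ → ℝ} {d : ℝ → ℕ → ℝ} {t L a : ℝ}
    (hlam : ∀ k, 0 ≤ lam k t) (hmu : ∀ k, 0 ≤ mu k t ∧ mu k t ≤ L)
    (ha0 : 0 ≤ a) (hxi : ∀ k, a ≤ xi (k + 1) t ∧ xi (k + 1) t ≤ L)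
    (hd : HasSum (d t) 0) (hd1 : Summable fun i => |d t i|) (N : ℕ) :
    ∑ i ∈ Finset.range (N + 1),
        ((SignType.sign (d t i) : ℝ) * KRHS lam mu xi d t i + a * |d t i|) ≤
      2 * L * ∑' k, |d t (k + (N + 1))| := by
  have hs : ∀ x : ℝ, (SignType.sign x : ℝ) * x = |x| := fun x => by
    rw [sign_mul_self]
  have hs1 : ∀ x y : ℝ, (SignType.sign x : ℝ) * y ≤ |y| := fun x y => by
    rcases lt_trichotomy x 0 with h | h | h
    · simpa [h] using neg_le_abs y
    · simp [h]
    · simpa [h] using le_abs_self y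
  have hsum : ∀ n, Summable fun k => (xi (k + n + 1) t - a) * |d t (k + n + 1)| := fun n =>
    Summable.of_nonneg_of_le
      (fun k => mul_nonneg (by linarith [(hxi (k + n)).1]) (abs_nonneg _))
      (fun k => mul_le_mul_of_nonneg_right (by linarith [(hxi (k + n)).2]) (abs_nonneg _))
      (((summable_nat_add_iff (n + 1)).2 hd1).mul_left L)
  have key : ∀ n, ∑ i ∈ Finset.range (n + 1),
        ((SignType.sign (d t i) : ℝ) * KRHS lam mu xi d t i + a * |d t i|) ≤
      -lam n t * |d t n| + mu (n + 1) t * |d t (n + 1)| +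
        ∑' k, (xi (k + n + 1) t - a) * |d t (k + n + 1)| := by
    intro n
    induction n with
    | zero =>
      have hd' : Summable fun k => d t (k + 1) := (summable_nat_add_iff 1).2 hd.summable
      have h0 : d t 0 = -∑' k, d t (k + 1) := by
        have := hd.summable.tsum_eq_zero_add
        rw [hd.tsum_eq] at this
        linarith
      have hxd : Summable fun k => (xi (k + 1) t - a) * d t (k + 1) :=
        Summable.of_norm (by
          refine (hsum 0).congr fun k => ?_
          rw [norm_mul, Real.norm_eq_abs, Real.norm_eq_abs,
            abs_of_nonneg (sub_nonneg.2 (hxi k).1)])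
      have h1 : ∑' k, xi (k + 1) t * d t (k + 1) =
          ∑' k, (xi (k + 1) t - a) * d t (k + 1) - a * d t 0 := by
        rw [h0, mul_neg, sub_neg_eq_add, ← tsum_mul_left, ← hxd.tsum_add (hd'.mul_left a)]
        exact tsum_congr fun k => by ring
      have h2 : |∑' k, (xi (k + 1) t - a) * d t (k + 1)| ≤
          ∑' k, (xi (k + 0 + 1) t - a) * |d t (k + 0 + 1)| := by
        have e : ∀ k, ‖(xi (k + 1) t - a) * d t (k + 1)‖ =
            (xi (k + 0 + 1) t - a) * |d t (k + 0 + 1)| := fun k => by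
          rw [norm_mul, Real.norm_eq_abs, Real.norm_eq_abs,
            abs_of_nonneg (sub_nonneg.2 (hxi k).1)]
        have := norm_tsum_le_tsum_norm ((hsum 0).congr fun k => (e k).symm)
        rwa [Real.norm_eq_abs, tsum_congr e] at this
      have h3 := hs1 (d t 0) (∑' k, (xi (k + 1) t - a) * d t (k + 1))
      have h4 := mul_le_mul_of_nonneg_left (hs1 (d t 0) (d t 1)) (hmu 1).1
      have h5 := hs (d t 0)
      rw [Finset.sum_range_one]
      simp only [KRHS_zero, h1]
      simp only [zero_add] at *
      rw [show (SignType.sign (d t 0) : ℝ) * (-lam 0 t * d t 0 + mu 1 t * d t 1 +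
          (∑' k, (xi (k + 1) t - a) * d t (k + 1) - a * d t 0)) =
          -lam 0 t * ((SignType.sign (d t 0) : ℝ) * d t 0) +
          mu 1 t * ((SignType.sign (d t 0) : ℝ) * d t 1) +
          (SignType.sign (d t 0) : ℝ) * ∑' k, (xi (k + 1) t - a) * d t (k + 1) -
          a * ((SignType.sign (d t 0) : ℝ) * d t 0) by ring, h5]
      linarith
    | succ n ih =>
      rw [Finset.sum_range_succ]
      have h1 : ∑' k, (xi (k + n + 1) t - a) * |d t (k + n + 1)| =
          (xi (n + 1) t - a) * |d t (n + 1)| +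
          ∑' k, (xi (k + (n + 1) + 1) t - a) * |d t (k + (n + 1) + 1)| := by
        rw [(hsum n).tsum_eq_zero_add]
        simp only [zero_add, show ∀ k, k + 1 + n + 1 = k + (n + 1) + 1 from fun k => by ring]
      have h2 := mul_le_mul_of_nonneg_left (hs1 (d t (n + 1)) (d t n)) (hlam n)
      have h3 := mul_le_mul_of_nonneg_left (hs1 (d t (n + 1)) (d t (n + 2))) (hmu (n + 2)).1
      have h4 := hs (d t (n + 1))
      rw [KRHS_succ, show (SignType.sign (d t (n + 1)) : ℝ) * (lam n t * d t n -
          (lam (n + 1) t + mu (n + 1) t + xi (n + 1) t) * d t (n + 1) +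
            mu (n + 2) t * d t (n + 2)) =
          lam n t * ((SignType.sign (d t (n + 1)) : ℝ) * d t n) -
          (lam (n + 1) t + mu (n + 1) t + xi (n + 1) t) *
            ((SignType.sign (d t (n + 1)) : ℝ) * d t (n + 1)) +
          mu (n + 2) t * ((SignType.sign (d t (n + 1)) : ℝ) * d t (n + 2)) by ring, h4]
      rw [h1] at ih
      rw [show n + 1 + 1 = n + 2 from rfl]
      linarith
  have hN := key N
  have hL : 0 ≤ L := (hmu 0).1.trans (hmu 0).2
  have hdN : Summable fun k => |d t (k + (N + 1))| := (summable_nat_add_iff (N + 1)).2 hd1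
  have h1 : ∑' k, (xi (k + N + 1) t - a) * |d t (k + N + 1)| ≤
      L * ∑' k, |d t (k + (N + 1))| := by
    rw [← tsum_mul_left]
    exact (hsum N).tsum_le_tsum
      (fun k => mul_le_mul_of_nonneg_right (by linarith [(hxi (k + N)).2]) (abs_nonneg _))
      (hdN.mul_left L)
  have h2 : |d t (N + 1)| ≤ ∑' k, |d t (k + (N + 1))| := by
    simpa using hdN.le_tsum 0 (fun _ _ => abs_nonneg _)
  have h3 : mu (N + 1) t * |d t (N + 1)| ≤ L * ∑' k, |d t (k + (N + 1))| :=
    mul_le_mul (hmu _).2 h2 (abs_nonneg _) hL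
  have h4 := mul_nonneg (hlam N) (abs_nonneg (d t N))
  clear key hsum hs1 hs
  linarith

/-! ### Absolute continuity of the coordinates and of the weight -/

theorem IsKolSolution.absolutelyContinuous {lam mu xi : ℕ → ℝ → ℝ} {p : ℝ → ℕ → ℝ}
    (hp : IsKolSolution lam mu xi p) (i : ℕ) {T : ℝ} (hT : 0 ≤ T) :
    AbsolutelyContinuousOnInterval (fun t => p t i) 0 T := by
  refine ac_of_abs_sub_le 1
    ((hp.integrable i T hT).absolutelyContinuousOnInterval_intervalIntegral
      (c := 0) Set.left_mem_uIcc) fun x hx y hy => ?_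
  rw [Set.uIcc_of_le hT] at hx hy
  rw [hp.eqn i x hx.1, hp.eqn i y hy.1]
  simp

theorem IsKolSolution.ae_hasDerivAt {lam mu xi : ℕ → ℝ → ℝ} {p : ℝ → ℕ → ℝ}
    (hp : IsKolSolution lam mu xi p) (i : ℕ) {T : ℝ} (hT : 0 ≤ T) :
    ∀ᵐ t : ℝ, t ∈ Set.Ioo 0 T → HasDerivAt (fun s => p s i) (KRHS lam mu xi p t i) t := by
  filter_upwards [(hp.integrable i T hT).ae_hasDerivAt_integral] with t ht htI
  have h1 : t ∈ Set.uIcc 0 T := by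
    rw [Set.uIcc_of_le hT]; exact Set.Ioo_subset_Icc_self htI
  refine ((ht h1 0 Set.left_mem_uIcc).const_add (p 0 i)).congr_of_eventuallyEq ?_
  filter_upwards [Ioi_mem_nhds htI.1] with s hs
  exact hp.eqn i s (le_of_lt hs)

/-- The exponential is Lipschitz on the bounded range of the continuous primitive of `a`. -/
theorem ac_exp_integral {a : ℝ → ℝ} {T : ℝ} (ha : IntervalIntegrable a volume 0 T) :
    AbsolutelyContinuousOnInterval (fun t => Real.exp (∫ τ in (0:ℝ)..t, a τ)) 0 T := by
  have hac := ha.absolutelyContinuousOnInterval_intervalIntegral (c := 0) Set.left_mem_uIcc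
  obtain ⟨B, hB⟩ := hac.exists_bound
  have hlip : ∀ x y, x ≤ B → y ≤ B → |Real.exp x - Real.exp y| ≤ Real.exp B * |x - y| := by
    intro x y hx hy
    wlog hxy : y ≤ x generalizing x y
    · rw [abs_sub_comm, abs_sub_comm x]
      exact this y x hy hx (le_of_not_ge hxy)
    rw [abs_of_nonneg (sub_nonneg.2 (Real.exp_le_exp.2 hxy)), abs_of_nonneg (sub_nonneg.2 hxy)]
    have h1 : Real.exp x - Real.exp y ≤ Real.exp x * (x - y) := by
      have h2 := Real.add_one_le_exp (y - x)
      have h3 : Real.exp y = Real.exp x * Real.exp (y - x) := by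
        rw [← Real.exp_add]; ring_nf
      have h4 := mul_le_mul_of_nonneg_left h2 (Real.exp_pos x).le
      rw [h3]; linarith
    exact h1.trans (mul_le_mul_of_nonneg_right (Real.exp_le_exp.2 hx) (sub_nonneg.2 hxy))
  refine ac_of_abs_sub_le (Real.exp B) hac fun x hx y hy => ?_
  exact hlip _ _ ((le_abs_self _).trans (hB x hx)) ((le_abs_self _).trans (hB y hy))

theorem IsKolSolution.sub_facts {lam mu xi : ℕ → ℝ → ℝ} {p q : ℝ → ℕ → ℝ}
    (hp : IsKolSolution lam mu xi p) (hq : IsKolSolution lam mu xi q) {t : ℝ} (ht : 0 ≤ t) :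
    HasSum (fun i => p t i + q t i) 2 ∧ HasSum (fun i => p t i - q t i) 0 ∧
      (∀ i, |p t i - q t i| ≤ p t i + q t i) ∧ Summable fun i => |p t i - q t i| := by
  have h1 := (hp.sum_one t ht).add (hq.sum_one t ht)
  have h2 := (hp.sum_one t ht).sub (hq.sum_one t ht)
  norm_num at h1 h2
  have h3 : ∀ i, |p t i - q t i| ≤ p t i + q t i := fun i => by
    have := hp.nonneg t ht i
    have := hq.nonneg t ht i
    rw [abs_le]; constructor <;> linarith
  exact ⟨h1, h2, h3, Summable.of_nonneg_of_le (fun _ => abs_nonneg _) h3 h1.summable⟩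

/-! ### Contraction in `ℓ¹` -/

set_option maxHeartbeats 1000000 in
/-- If every positive state has catastrophe rate at least `a t`, then the `ℓ¹`-distance of two
solutions decays at least like `exp (-∫ a)`. -/
theorem kol_contraction {L : ℝ} {lam mu xi : ℕ → ℝ → ℝ} (hR : KolRates L lam mu xi)
    {a : ℝ → ℝ} (ha0 : ∀ t, 0 ≤ t → 0 ≤ a t) (haxi : ∀ k t, 0 ≤ t → a t ≤ xi (k + 1) t)
    {p q : ℝ → ℕ → ℝ} (hp : IsKolSolution lam mu xi p) (hq : IsKolSolution lam mu xi q)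
    {T : ℝ} (hT : 0 ≤ T) (haT : IntervalIntegrable a volume 0 T) :
    ∑' i, |p T i - q T i| ≤
      (∑' i, |p 0 i - q 0 i|) * Real.exp (-∫ τ in (0:ℝ)..T, a τ) := by
  set E : ℝ → ℝ := fun t => Real.exp (∫ τ in (0:ℝ)..t, a τ) with hE
  have hEac : AbsolutelyContinuousOnInterval E 0 T := ac_exp_integral haT
  have hdac : ∀ i, AbsolutelyContinuousOnInterval (fun t => |p t i - q t i|) 0 T := fun i =>
    ac_of_abs_sub_le 1
      ((hp.absolutelyContinuous i hT).sub (hq.absolutelyContinuous i hT)) fun x _ y _ => by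
        rw [one_mul]; exact abs_abs_sub_abs_le_abs_sub _ _
  have hVac : ∀ N, AbsolutelyContinuousOnInterval
      (fun t => E t * ∑ i ∈ Finset.range (N + 1), |p t i - q t i|) 0 T := fun N =>
    hEac.mul (ac_finset_sum _ hdac)
  -- `R N` dominates the derivative of the weighted truncated norm; the tail of `∑ |p - q|` is
  -- replaced by the tail of `∑ (p + q)`, which equals `2` minus a finite sum of continuous functions.
  set R : ℕ → ℝ → ℝ := fun N t =>
    E t * (2 * L * (2 - ∑ i ∈ Finset.range (N + 1), (p t i + q t i))) with hRdef
  have hRcont : ∀ N, ContinuousOn (R N) (Set.uIcc 0 T) := fun N =>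
    hEac.continuousOn.mul (continuousOn_const.mul (continuousOn_const.sub
      (continuousOn_finsetSum _ fun i _ =>
        (hp.absolutelyContinuous i hT).continuousOn.add
          (hq.absolutelyContinuous i hT).continuousOn)))
  have hderiv : ∀ N, ∀ᵐ t : ℝ, t ∈ Set.Ioo 0 T →
      deriv (fun t => E t * ∑ i ∈ Finset.range (N + 1), |p t i - q t i|) t ≤ R N t := by
    intro N
    filter_upwards [ae_all_iff.2 fun i => hp.ae_hasDerivAt i hT,
      ae_all_iff.2 fun i => hq.ae_hasDerivAt i hT, ae_all_iff.2 hR.rates_bdd,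
      ae_all_iff.2 fun i => (hdac i).ae_differentiableAt,
      haT.ae_hasDerivAt_integral] with t h1 h2 h3 h4 h5 ht
    have htI : t ∈ Set.uIcc 0 T := by
      rw [Set.uIcc_of_le hT]; exact Set.Ioo_subset_Icc_self ht
    have ht0 : 0 ≤ t := ht.1.le
    obtain ⟨f1, f2, f3, f4⟩ := hp.sub_facts hq ht0
    set d : ℝ → ℕ → ℝ := fun s j => p s j - q s j with hd
    have hdd : ∀ i, HasDerivAt (fun s => |p s i - q s i|)
        ((SignType.sign (d t i) : ℝ) * KRHS lam mu xi d t i) t := fun i => by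
      have := (h1 i ht).sub (h2 i ht)
      rw [KRHS_sub (fun k => ⟨(hR.rates_nonneg k t ht0).2.2, (h3 k ht0).2.2⟩)
        (hp.sum_one t ht0).summable (hq.sum_one t ht0).summable
        (hp.nonneg t ht0) (hq.nonneg t ht0) i] at this
      exact deriv_abs_eq_sign_mul this (h4 i htI)
    -- differentiating the weight `E` produces exactly the term `a t * |d t i|`
    have hEd : HasDerivAt E (E t * a t) t := (h5 htI 0 Set.left_mem_uIcc).exp
    have hV := hEd.mul (HasDerivAt.fun_sum (u := Finset.range (N + 1)) fun i _ => hdd i)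
    have hV' : deriv (fun t => E t * ∑ i ∈ Finset.range (N + 1), |p t i - q t i|) t =
      E t * ∑ i ∈ Finset.range (N + 1),
        ((SignType.sign (d t i) : ℝ) * KRHS lam mu xi d t i + a t * |d t i|) := by
      refine hV.deriv.trans ?_
      rw [Finset.sum_add_distrib, ← Finset.mul_sum]
      ring
    rw [hV']
    refine mul_le_mul_of_nonneg_left ?_ (Real.exp_pos _).le
    refine (sum_sign_mul_KRHS_le (fun k => (hR.rates_nonneg k t ht0).1)
      (fun k => ⟨(hR.rates_nonneg k t ht0).2.1, (h3 k ht0).2.1⟩) (ha0 t ht0)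
      (fun k => ⟨haxi k t ht0, (h3 (k + 1) ht0).2.2⟩) f2 f4 N).trans ?_
    refine mul_le_mul_of_nonneg_left ?_ (by linarith [hR.posL])
    have h6 := f1.summable.sum_add_tsum_nat_add (N + 1)
    rw [f1.tsum_eq] at h6
    have h7 : ∑' k, |d t (k + (N + 1))| ≤ ∑' k, (p t (k + (N + 1)) + q t (k + (N + 1))) :=
      ((summable_nat_add_iff (N + 1)).2 f4).tsum_le_tsum (fun k => f3 _)
        ((summable_nat_add_iff (N + 1)).2 f1.summable)
    linarith
  have hbound : ∀ N, E T * ∑ i ∈ Finset.range (N + 1), |p T i - q T i| ≤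
      (∑' i, |p 0 i - q 0 i|) + ∫ t in (0:ℝ)..T, R N t := by
    intro N
    have h1 := (hVac N).integral_deriv_eq_sub
    have h2 : ∫ t in (0:ℝ)..T,
        deriv (fun t => E t * ∑ i ∈ Finset.range (N + 1), |p t i - q t i|) t ≤
        ∫ t in (0:ℝ)..T, R N t := by
      refine intervalIntegral.integral_mono_ae_restrict hT (hVac N).intervalIntegrable_deriv
        (hRcont N).intervalIntegrable ?_
      rw [← MeasureTheory.Measure.restrict_congr_set (Ioo_ae_eq_Icc (μ := volume) (a := 0) (b := T))]
      exact (ae_restrict_iff' measurableSet_Ioo).2 (hderiv N)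
    have h3 := (hp.sub_facts hq le_rfl).2.2.2.sum_le_tsum (Finset.range (N + 1))
      (fun i _ => abs_nonneg _)
    have h4 : E 0 = 1 := by simp [hE]
    rw [h4, one_mul] at h1
    linarith
  have hlim : Tendsto (fun N => ∫ t in (0:ℝ)..T, R N t) atTop (𝓝 0) := by
    suffices h : Tendsto (fun N => ∫ t in (0:ℝ)..T, R N t) atTop
        (𝓝 (∫ _ in (0:ℝ)..T, (0:ℝ))) by simpa using h
    refine intervalIntegral.tendsto_integral_filter_of_dominated_convergence
      (F := R) (f := fun _ => 0) (fun t => E t * (2 * L * 2)) ?_ ?_ ?_ ?_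
    · exact Eventually.of_forall fun N =>
        ((hRcont N).mono Set.uIoc_subset_uIcc).aestronglyMeasurable measurableSet_uIoc
    · refine Eventually.of_forall fun N => Eventually.of_forall fun t ht => ?_
      rw [Set.uIoc_of_le hT] at ht
      obtain ⟨f1, -, f3, -⟩ := hp.sub_facts hq ht.1.le
      have h1 := sum_le_hasSum (Finset.range (N + 1))
        (fun i _ => (abs_nonneg _).trans (f3 i)) f1
      have h2 := Finset.sum_nonneg (s := Finset.range (N + 1))
        (fun i _ => (abs_nonneg _).trans (f3 i))
      have hL := hR.posL
      have hEp : 0 < E t := Real.exp_pos _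
      rw [Real.norm_eq_abs, abs_of_nonneg]
      · exact mul_le_mul_of_nonneg_left
          (mul_le_mul_of_nonneg_left (by linarith) (by linarith)) hEp.le
      · exact mul_nonneg hEp.le (mul_nonneg (by linarith) (by linarith))
    · exact (hEac.continuousOn.mul continuousOn_const).intervalIntegrable
    · refine Eventually.of_forall fun t ht => ?_
      rw [Set.uIoc_of_le hT] at ht
      obtain ⟨f1, -, -, -⟩ := hp.sub_facts hq ht.1.le
      have h1 := (tendsto_add_atTop_iff_nat 1).2 f1.tendsto_sum_nat
      have h2 := ((h1.const_sub 2).const_mul (2 * L)).const_mul (E t)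
      simpa using h2
  obtain ⟨-, -, -, f4⟩ := hp.sub_facts hq hT
  have h1 := ((tendsto_add_atTop_iff_nat 1).2 f4.hasSum.tendsto_sum_nat).const_mul (E T)
  have h2 := hlim.const_add (∑' i, |p 0 i - q 0 i|)
  have h3 := le_of_tendsto_of_tendsto' h1 h2 hbound
  rw [Real.exp_neg, ← div_eq_mul_inv, le_div_iff₀ (Real.exp_pos _)]
  linarith

/-! ### The queue with catastrophes -/

/-- Theorem 2. In the `M_t|M_t|S` specialization with
`ζ = inf_{n≥1} ζ_n > 0`, if there is `ε > 0` with `∫₀^∞ (ζ ξ(t) - ε λ(t)) dt = +∞`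
(large catastrophe rates), then the queue-length process is weakly ergodic and, for
solutions `p, π` with `p(0) = e_k`, `π(0) = e_0`,
`‖p(t) - π(t)‖ ≤ 4 (1+ε)^k ε⁻¹ exp(-∫₀ᵗ (ζ ξ - ε λ))` for all `t ≥ 0`. -/
theorem mms_catastrophes_ergodicity
    (L : ℝ) (S : ℕ) (hS : 1 ≤ S) (lam0 mu0 xi0 : ℝ → ℝ) (zeta : ℕ → ℝ)
    (hzeta : ∀ k : ℕ, 0 < zeta k)
    (hR : KolRates L (mmsLam lam0) (mmsMu S mu0) (mmsXi zeta xi0))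
    (zI : ℝ) (hzI : zI = ⨅ n : ℕ, zeta (n + 1)) (hzIpos : 0 < zI)
    (ε : ℝ) (hε : 0 < ε)
    (hdiv : Tendsto (fun T : ℝ => ∫ t in (0:ℝ)..T, (zI * xi0 t - ε * lam0 t)) atTop atTop) :
    (∀ p q : ℝ → ℕ → ℝ,
        IsKolSolution (mmsLam lam0) (mmsMu S mu0) (mmsXi zeta xi0) p →
        IsKolSolution (mmsLam lam0) (mmsMu S mu0) (mmsXi zeta xi0) q →
          Tendsto (fun t => ∑' i : ℕ, |p t i - q t i|) atTop (𝓝 0)) ∧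
      ∀ k : ℕ, ∀ p π' : ℝ → ℕ → ℝ,
        IsKolSolution (mmsLam lam0) (mmsMu S mu0) (mmsXi zeta xi0) p →
        IsKolSolution (mmsLam lam0) (mmsMu S mu0) (mmsXi zeta xi0) π' →
        p 0 = eVec k → π' 0 = eVec 0 →
          ∀ t : ℝ, 0 ≤ t →
            (∑' i : ℕ, |p t i - π' t i|) ≤
              4 * (1 + ε) ^ k / ε *
                Real.exp (-∫ τ in (0:ℝ)..t, (zI * xi0 τ - ε * lam0 τ)) := by
  have hlam0 : ∀ t, 0 ≤ t → 0 ≤ lam0 t := fun t ht => (hR.rates_nonneg 0 t ht).1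
  have hxi0 : ∀ t, 0 ≤ t → 0 ≤ xi0 t := fun t ht =>
    nonneg_of_mul_nonneg_right (hR.rates_nonneg 0 t ht).2.2 (hzeta 0)
  have hz : ∀ n, zI ≤ zeta (n + 1) := fun n => by
    rw [hzI]
    exact ciInf_le ⟨0, by rintro _ ⟨m, rfl⟩; exact (hzeta _).le⟩ n
  have hint : ∀ f : ℝ → ℝ, Measurable f → (∀ t, 0 ≤ t → 0 ≤ f t) →
      (∀ᵐ t : ℝ, 0 ≤ t → f t ≤ L) → ∀ T, 0 ≤ T → IntervalIntegrable f volume 0 T := by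
    intro f hf hf0 hfL T hT
    refine (intervalIntegrable_const (c := L)).mono_fun hf.aestronglyMeasurable ?_
    rw [Set.uIoc_of_le hT]
    refine (ae_restrict_iff' measurableSet_Ioc).2 ?_
    filter_upwards [hfL] with t ht htI
    rw [Real.norm_eq_abs, Real.norm_eq_abs, abs_of_nonneg (hf0 t htI.1.le)]
    exact (ht htI.1.le).trans (le_abs_self L)
  have hlamI : ∀ T, 0 ≤ T → IntervalIntegrable lam0 volume 0 T :=
    hint lam0 (hR.meas_lam 0) hlam0 (by
      filter_upwards [hR.rates_bdd 0] with t ht h0 using (ht h0).1)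
  have hxiI : ∀ T, 0 ≤ T → IntervalIntegrable (fun t => zI * xi0 t) volume 0 T := by
    refine hint _ ?_ (fun t ht => mul_nonneg hzIpos.le (hxi0 t ht)) ?_
    · -- `xi0` inherits measurability from `ζ_0 ξ` because `ζ_0 ≠ 0`
      have h1 := (hR.meas_xi 0).const_mul (zI * (zeta 0)⁻¹)
      convert h1 using 2 with t
      simp only [mmsXi]
      have := (hzeta 0).ne'
      field_simp
    · filter_upwards [hR.rates_bdd 1] with t ht h0
      exact (mul_le_mul_of_nonneg_right (hz 0) (hxi0 t h0)).trans (ht h0).2.2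
  have main : ∀ p q : ℝ → ℕ → ℝ,
      IsKolSolution (mmsLam lam0) (mmsMu S mu0) (mmsXi zeta xi0) p →
      IsKolSolution (mmsLam lam0) (mmsMu S mu0) (mmsXi zeta xi0) q → ∀ T, 0 ≤ T →
      ∑' i : ℕ, |p T i - q T i| ≤
        (∑' i : ℕ, |p 0 i - q 0 i|) * Real.exp (-∫ τ in (0:ℝ)..T, (zI * xi0 τ - ε * lam0 τ)) := by
    intro p q hp hq T hT
    refine (kol_contraction hR (a := fun t => zI * xi0 t)
      (fun t ht => mul_nonneg hzIpos.le (hxi0 t ht))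
      (fun k t ht => mul_le_mul_of_nonneg_right (hz k) (hxi0 t ht)) hp hq hT (hxiI T hT)).trans ?_
    refine mul_le_mul_of_nonneg_left (Real.exp_le_exp.2 (neg_le_neg ?_))
      (tsum_nonneg fun i => abs_nonneg _)
    refine intervalIntegral.integral_mono_on hT ((hxiI T hT).sub ((hlamI T hT).const_mul ε))
      (hxiI T hT) fun t ht => ?_
    have := mul_nonneg hε.le (hlam0 t ht.1)
    linarith
  refine ⟨fun p q hp hq => ?_, fun k p π' hp hπ hp0 hπ0 t ht => ?_⟩
  · have h1 : Tendsto (fun T : ℝ =>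
        (∑' i : ℕ, |p 0 i - q 0 i|) * Real.exp (-∫ t in (0:ℝ)..T, (zI * xi0 t - ε * lam0 t)))
        atTop (𝓝 ((∑' i : ℕ, |p 0 i - q 0 i|) * 0)) :=
      (Real.tendsto_exp_neg_atTop_nhds_zero.comp hdiv).const_mul _
    rw [mul_zero] at h1
    refine squeeze_zero' (Eventually.of_forall fun t => tsum_nonneg fun i => abs_nonneg _) ?_ h1
    filter_upwards [eventually_ge_atTop 0] with T hT using main p q hp hq T hT
  · refine (main p π' hp hπ t ht).trans
      (mul_le_mul_of_nonneg_right ?_ (Real.exp_pos _).le)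
    have hpos : 0 ≤ 4 * (1 + ε) ^ k / ε := by positivity
    -- For `k = 0` the initial values coincide; for `k ≥ 1` the prefactor is at least `4`,
    -- while the initial distance is at most `2`.
    rcases Nat.eq_zero_or_pos k with rfl | hk
    · simpa [hp0, hπ0] using hpos
    · obtain ⟨f1, -, f3, f4⟩ := hp.sub_facts hπ le_rfl
      have h2 : ∑' i : ℕ, |p 0 i - π' 0 i| ≤ 2 :=
        (f4.tsum_le_tsum f3 f1.summable).trans_eq f1.tsum_eq
      have h3 : 1 + ε ≤ (1 + ε) ^ k := le_self_pow₀ (by linarith) hk.ne'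
      refine h2.trans ?_
      rw [le_div_iff₀ hε]
      linarith
end

section
/- Consider the M_t|M_t|S queue with catastrophes with S = 10^12, λ(t) = 1 + sin(2πt), μ(t) = 3 + 2cos(2πt), and ξ_k(t) = (1 + 1/k)(1 − sin(2πt)). Then for every k ∈ ℕ, the solution p* with p*(0) = e_k and the solution p** with p**(0) = e_0 satisfy, for all t ≥ 0: ‖p*(t) − p**(t)‖ ≤ 2^{k+2}·exp(−∫₀ᵗ (3 + 2cos(2πτ) − 2sin(2πτ)) dτ) ≤ 2^{k+4}·e^{−3t}, and likewise |E_k(t) − E_0(t)| ≤ 2^{k+2}·exp(−∫₀ᵗ (3 + 2cos(2πτ) − 2sin(2πτ)) dτ) ≤ 2^{k+4}·e^{−3t}. -/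
/-!
Let `T n` be the difference of the tails `∑_{i ≥ n}` of `p` and `q`.  Since both vectors have mass
one, `T n = ∑_{i < n} (q i - p i)`, a finite sum, and summing the first coordinates of the forward
system gives a closed system for the `T n` (`sum_KRHS`, `tailDiff_eqn`).  After summation by parts in
the catastrophe term (`cata_abel`) its off-diagonal coefficients are nonnegative, because
`ζ j = 1 + 1/j` decreases.  With weights `2 ^ (n - 1)` the columns of the system have logarithmic
norm at most `-(μ - λ + ξ)`, which here is `-(3 + 2 cos 2πt - 2 sin 2πt)`; this is `weighted_bound`.
Hence `∑ 2 ^ (n - 1) |T n|` is at most `2 ^ k exp (-∫ (μ - λ + ξ))` (`tailDiff_contraction`).  The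
`ℓ¹` distance is at most `2 ∑ |T n|` and the difference of means is `∑ T n`, whence both bounds.

The infinite sums are handled by truncating at level `N`.  A given solution is only known to be
stochastic, so the truncation error has to be controlled a priori: `R n = ∑_{i ≥ n} p i` satisfies
`R (n + 1)' ≤ 2 R n`, and induction on `n` gives `R n ≤ 3 ^ k 3 ^ (-n) e ^ (6 t)` (`tail_decay`),
which beats the weight `2 ^ N`.  The same decay makes the catastrophe sum continuous in time.  The
truncated system is treated by Duhamel's formula with a common damping rate `Λ`, so that absolute
values never have to be differentiated (`finite_gronwall`).
-/

open MeasureTheory Filter Topology Real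

/-! ### Tails of a stochastic vector -/

/-- Continuous, nonnegative arrival (`l`), service (`m`) and catastrophe (`x`) intensities with the
upper bounds `2`, `5`, `2` of the example. -/
structure MMSRates (l m x : ℝ → ℝ) : Prop where
  cont_l : Continuous l
  cont_m : Continuous m
  cont_x : Continuous x
  l_nonneg : ∀ t, 0 ≤ l t
  l_le : ∀ t, l t ≤ 2
  m_nonneg : ∀ t, 0 ≤ m t
  m_le : ∀ t, m t ≤ 5
  x_nonneg : ∀ t, 0 ≤ x t
  x_le : ∀ t, x t ≤ 2

/-- The weighted tail `∑_{j ≥ n + 1} (1 + 1/j) a j` (index shifted by one, so that the factor `1/j`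
is never evaluated at `j = 0`). -/
noncomputable def cataTail (a : ℕ → ℝ) (n : ℕ) : ℝ :=
  ∑' k : ℕ, (1 + 1 / ((k + n + 1 : ℕ) : ℝ)) * a (k + n + 1)

theorem zeta_bounds (j : ℕ) :
    0 ≤ 1 + 1 / ((j + 1 : ℕ) : ℝ) ∧ 1 + 1 / ((j + 1 : ℕ) : ℝ) ≤ 2 := by
  have h1 : (1 : ℝ) ≤ ((j + 1 : ℕ) : ℝ) := by exact_mod_cast Nat.le_add_left 1 j
  have h2 : 1 / ((j + 1 : ℕ) : ℝ) ≤ 1 := by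
    rw [div_le_one (by linarith)]; exact h1
  have h3 : 0 ≤ 1 / ((j + 1 : ℕ) : ℝ) := by positivity
  constructor <;> linarith

theorem summable_cataTail {a : ℕ → ℝ} (h0 : ∀ i, 0 ≤ a i) (hs : Summable a) (n : ℕ) :
    Summable fun k : ℕ => (1 + 1 / ((k + n + 1 : ℕ) : ℝ)) * a (k + n + 1) := by
  have h : Summable fun k : ℕ => 2 * a (k + n + 1) :=
    ((summable_nat_add_iff (n + 1)).2 hs).mul_left 2
  exact h.of_nonneg_of_le (fun k => mul_nonneg (zeta_bounds (k + n)).1 (h0 _))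
    fun k => mul_le_mul_of_nonneg_right (zeta_bounds (k + n)).2 (h0 _)

theorem cataTail_succ {a : ℕ → ℝ} (h0 : ∀ i, 0 ≤ a i) (hs : Summable a) (n : ℕ) :
    cataTail a n = (1 + 1 / ((n + 1 : ℕ) : ℝ)) * a (n + 1) + cataTail a (n + 1) := by
  unfold cataTail
  rw [(summable_cataTail h0 hs n).tsum_eq_zero_add]
  congr 1
  · simp
  · refine tsum_congr fun k => ?_
    have : k + 1 + n + 1 = k + (n + 1) + 1 := by omega
    rw [this]

theorem tail_eq_tsum {a : ℕ → ℝ} (hs : HasSum a 1) (n : ℕ) :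
    1 - ∑ i ∈ Finset.range n, a i = ∑' k, a (k + n) := by
  rw [← hs.tsum_eq, ← hs.summable.sum_add_tsum_nat_add n]; ring

theorem tail_nonneg {a : ℕ → ℝ} (h0 : ∀ i, 0 ≤ a i) (hs : HasSum a 1) (n : ℕ) :
    0 ≤ 1 - ∑ i ∈ Finset.range n, a i := by
  rw [tail_eq_tsum hs]; exact tsum_nonneg fun k => h0 _

theorem le_tail {a : ℕ → ℝ} (h0 : ∀ i, 0 ≤ a i) (hs : HasSum a 1) (n : ℕ) :
    a n ≤ 1 - ∑ i ∈ Finset.range n, a i := by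
  have := tail_nonneg h0 hs (n + 1)
  rw [Finset.sum_range_succ] at this; linarith

theorem cataTail_nonneg {a : ℕ → ℝ} (h0 : ∀ i, 0 ≤ a i) (n : ℕ) : 0 ≤ cataTail a n :=
  tsum_nonneg fun k => mul_nonneg (zeta_bounds (k + n)).1 (h0 _)

theorem cataTail_le {a : ℕ → ℝ} (h0 : ∀ i, 0 ≤ a i) (hs : HasSum a 1) (n : ℕ) :
    cataTail a n ≤ 2 * (1 - ∑ i ∈ Finset.range (n + 1), a i) := by
  rw [tail_eq_tsum hs, ← tsum_mul_left]
  exact (summable_cataTail h0 hs.summable n).tsum_le_tsum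
    (fun k => mul_le_mul_of_nonneg_right (zeta_bounds (k + n)).2 (h0 _))
    (((summable_nat_add_iff (n + 1)).2 hs.summable).mul_left 2)

/-! ### Partial sums of the forward system -/

/-- Birth and death terms telescope, and the catastrophes out of states `1, …, n` cancel against
their contribution to state `0`. -/
theorem sum_KRHS {l m x : ℝ → ℝ} {S : ℕ} {p : ℝ → ℕ → ℝ}
    (hp : IsKolSolution (mmsLam l) (mmsMu S m) (mmsXi (fun j => 1 + 1 / (j : ℝ)) x) p)
    {t : ℝ} (ht : 0 ≤ t) (n : ℕ) :
    ∑ i ∈ Finset.range (n + 1),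
        KRHS (mmsLam l) (mmsMu S m) (mmsXi (fun j => 1 + 1 / (j : ℝ)) x) p t i =
      -l t * p t n + ((min (n + 1) S : ℕ) : ℝ) * m t * p t (n + 1) + x t * cataTail (p t) n := by
  induction n with
  | zero =>
    simp only [zero_add, Finset.sum_range_one, KRHS, mmsLam, mmsMu, mmsXi, cataTail]
    rw [← tsum_mul_left]
    congr 1
    refine tsum_congr fun k => ?_
    simp only [add_zero]; ring
  | succ n ih =>
    rw [Finset.sum_range_succ, ih, cataTail_succ (hp.nonneg t ht) (hp.sum_one t ht).summable n]
    simp only [KRHS, mmsLam, mmsMu, mmsXi]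
    ring

theorem sum_eqn {l m x : ℝ → ℝ} {S : ℕ} {p : ℝ → ℕ → ℝ}
    (hp : IsKolSolution (mmsLam l) (mmsMu S m) (mmsXi (fun j => 1 + 1 / (j : ℝ)) x) p)
    {t : ℝ} (ht : 0 ≤ t) (n : ℕ) :
    IntervalIntegrable (fun τ => -l τ * p τ n + ((min (n + 1) S : ℕ) : ℝ) * m τ * p τ (n + 1) +
        x τ * cataTail (p τ) n) volume 0 t ∧
    ∑ i ∈ Finset.range (n + 1), p t i = ∑ i ∈ Finset.range (n + 1), p 0 i +
      ∫ τ in (0:ℝ)..t, (-l τ * p τ n + ((min (n + 1) S : ℕ) : ℝ) * m τ * p τ (n + 1) +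
        x τ * cataTail (p τ) n) := by
  have hint := IntervalIntegrable.sum (Finset.range (n + 1)) (fun i _ => hp.integrable i t ht)
  have hcongr : Set.EqOn (∑ i ∈ Finset.range (n + 1), fun τ =>
      KRHS (mmsLam l) (mmsMu S m) (mmsXi (fun j => 1 + 1 / (j : ℝ)) x) p τ i)
      (fun τ => -l τ * p τ n + ((min (n + 1) S : ℕ) : ℝ) * m τ * p τ (n + 1) +
        x τ * cataTail (p τ) n) (Set.uIcc 0 t) := by
    intro τ hτ
    rw [Set.uIcc_of_le ht] at hτ
    simp only [Finset.sum_apply]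
    exact sum_KRHS hp hτ.1 n
  refine ⟨hint.congr (hcongr.mono Set.uIoc_subset_uIcc), ?_⟩
  rw [← intervalIntegral.integral_congr hcongr]
  simp only [Finset.sum_apply]
  rw [intervalIntegral.integral_finsetSum fun i _ => hp.integrable i t ht,
    ← Finset.sum_add_distrib]
  exact Finset.sum_congr rfl fun i _ => hp.eqn i t ht

theorem sum_eVec (k n : ℕ) : ∑ i ∈ Finset.range n, eVec k i = if k < n then 1 else 0 := by
  simp [eVec]

/-- A priori geometric decay of the tails. Only births across the level `n` increase the tail beyond
`n`, so the tail at `n + 1` grows at rate at most twice the tail at `n`. -/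
theorem tail_decay {l m x : ℝ → ℝ} (hr : MMSRates l m x) {S : ℕ} {p : ℝ → ℕ → ℝ}
    (hp : IsKolSolution (mmsLam l) (mmsMu S m) (mmsXi (fun j => 1 + 1 / (j : ℝ)) x) p)
    {k : ℕ} (hp0 : p 0 = eVec k) (n : ℕ) {t : ℝ} (ht : 0 ≤ t) :
    1 - ∑ i ∈ Finset.range n, p t i ≤ 3 ^ k * (1 / 3) ^ n * Real.exp (6 * t) := by
  induction n generalizing t with
  | zero =>
    have h1 : (1 : ℝ) ≤ 3 ^ k := one_le_pow₀ (by norm_num)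
    have h2 : 1 ≤ Real.exp (6 * t) := Real.one_le_exp (by linarith)
    simp only [Finset.range_zero, Finset.sum_empty, pow_zero, mul_one, sub_zero]
    nlinarith
  | succ n ih =>
    obtain ⟨hint, heq⟩ := sum_eqn hp ht n
    by_cases hk : k < n + 1
    · rw [heq, hp0, sum_eVec, if_pos hk]
      have hmono : ∫ τ in (0:ℝ)..t, (-(2 * (3 ^ k * (1 / 3) ^ n * Real.exp (6 * τ)))) ≤
          ∫ τ in (0:ℝ)..t, (-l τ * p τ n + ((min (n + 1) S : ℕ) : ℝ) * m τ * p τ (n + 1) +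
            x τ * cataTail (p τ) n) := by
        refine intervalIntegral.integral_mono_on ht ?_ hint fun τ hτ => ?_
        · exact Continuous.intervalIntegrable (by fun_prop) _ _
        · have h1 := ih hτ.1
          have h2 := le_tail (hp.nonneg τ hτ.1) (hp.sum_one τ hτ.1) n
          have h3 : l τ * p τ n ≤ 2 * p τ n :=
            mul_le_mul_of_nonneg_right (hr.l_le τ) (hp.nonneg τ hτ.1 n)
          have h4 : 0 ≤ ((min (n + 1) S : ℕ) : ℝ) * m τ * p τ (n + 1) :=
            mul_nonneg (mul_nonneg (Nat.cast_nonneg _) (hr.m_nonneg τ)) (hp.nonneg τ hτ.1 _)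
          have h5 : 0 ≤ x τ * cataTail (p τ) n :=
            mul_nonneg (hr.x_nonneg τ) (cataTail_nonneg (hp.nonneg τ hτ.1) n)
          linarith
      have hval : ∫ τ in (0:ℝ)..t, (-(2 * (3 ^ k * (1 / 3) ^ n * Real.exp (6 * τ)))) =
          -(3 ^ k * (1 / 3) ^ (n + 1) * (Real.exp (6 * t) - 1)) := by
        have hd : ∀ τ ∈ Set.uIcc 0 t, HasDerivAt
            (fun τ => -(3 ^ k * (1 / 3) ^ (n + 1) * Real.exp (6 * τ)))
            (-(2 * (3 ^ k * (1 / 3) ^ n * Real.exp (6 * τ)))) τ := by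
          intro τ _
          have := (((hasDerivAt_id τ).const_mul 6).exp.const_mul
            ((3:ℝ) ^ k * (1 / 3) ^ (n + 1))).neg
          refine this.congr_deriv ?_
          simp only [id, pow_succ]; ring
        rw [intervalIntegral.integral_eq_sub_of_hasDerivAt hd
          (Continuous.intervalIntegrable (by fun_prop) _ _)]
        simp only [mul_zero, Real.exp_zero]; ring
      rw [hval] at hmono
      have : (0:ℝ) ≤ 3 ^ k * (1 / 3) ^ (n + 1) := by positivity
      linarith
    · have h1 : 1 - ∑ i ∈ Finset.range (n + 1), p t i ≤ 1 := by
        have := Finset.sum_nonneg (s := Finset.range (n + 1)) fun i _ => hp.nonneg t ht i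
        linarith
      have h2 : 1 ≤ Real.exp (6 * t) := Real.one_le_exp (by linarith)
      have h3 : (1:ℝ) ≤ 3 ^ k * (1 / 3) ^ (n + 1) := by
        rw [one_div, inv_pow, ← div_eq_mul_inv, one_le_div (by positivity)]
        exact pow_le_pow_right₀ (by norm_num) (by omega)
      nlinarith

theorem continuousOn_coord {l m x : ℝ → ℝ} {S : ℕ} {p : ℝ → ℕ → ℝ}
    (hp : IsKolSolution (mmsLam l) (mmsMu S m) (mmsXi (fun j => 1 + 1 / (j : ℝ)) x) p)
    {t : ℝ} (ht : 0 ≤ t) (i : ℕ) : ContinuousOn (fun s => p s i) (Set.Icc 0 t) := by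
  have h := intervalIntegral.continuousOn_primitive_interval
    (μ := volume) ((intervalIntegrable_iff_integrableOn_Icc_of_le ht).1 (hp.integrable i t ht)
      |> fun h => by rwa [← Set.uIcc_of_le ht] at h)
  rw [Set.uIcc_of_le ht] at h
  exact (h.const_add (p 0 i)).congr fun s hs => hp.eqn i s hs.1

/-- By `tail_decay` the series converges uniformly on `[0, t]`. -/
theorem continuousOn_cataTail {l m x : ℝ → ℝ} (hr : MMSRates l m x) {S : ℕ} {p : ℝ → ℕ → ℝ}
    (hp : IsKolSolution (mmsLam l) (mmsMu S m) (mmsXi (fun j => 1 + 1 / (j : ℝ)) x) p)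
    {k : ℕ} (hp0 : p 0 = eVec k) {t : ℝ} (ht : 0 ≤ t) (n : ℕ) :
    ContinuousOn (fun s => cataTail (p s) n) (Set.Icc 0 t) := by
  unfold cataTail
  refine continuousOn_tsum (u := fun j => 2 * (3 ^ k * (1 / 3) ^ (j + (n + 1)) * Real.exp (6 * t)))
    (fun j => (continuousOn_coord hp ht _).const_mul _) ?_ fun j s hs => ?_
  · have : Summable fun j : ℕ => ((1:ℝ) / 3) ^ (j + (n + 1)) :=
      (summable_nat_add_iff (n + 1)).2
        (summable_geometric_of_lt_one (by norm_num) (by norm_num))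
    exact ((this.mul_left _).mul_right _).mul_left _
  · have h0 := hp.nonneg s hs.1 (j + n + 1)
    have h1 := (le_tail (hp.nonneg s hs.1) (hp.sum_one s hs.1) (j + n + 1)).trans
      (tail_decay hr hp hp0 (j + n + 1) hs.1)
    have h2 : Real.exp (6 * s) ≤ Real.exp (6 * t) := Real.exp_le_exp.2 (by linarith [hs.2])
    have h3 : p s (j + n + 1) ≤ 3 ^ k * (1 / 3) ^ (j + (n + 1)) * Real.exp (6 * t) :=
      h1.trans (mul_le_mul_of_nonneg_left h2 (by positivity))
    rw [Real.norm_eq_abs, abs_of_nonneg (mul_nonneg (zeta_bounds (j + n)).1 h0)]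
    exact mul_le_mul (zeta_bounds (j + n)).2 h3 h0 (by norm_num)

/-! ### A weighted Gronwall inequality for finite systems -/

/-- If `α` bounds from below the decay rate of the weighted `ℓ¹`-norm `∑ d i |y i|`, expressed
through `h + Λ y` for a common damping rate `Λ`, and `ε` is a defect, then the norm decays
like `exp (-a)` with `a' = α`, up to an error proportional to `ε`. -/
theorem finite_gronwall {t₀ Λ ε κ : ℝ} (ht₀ : 0 ≤ t₀) (hε : 0 ≤ ε) {N : ℕ}
    {y h : ℕ → ℝ → ℝ} {d : ℕ → ℝ} (hd : ∀ i, 0 ≤ d i)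
    {a α : ℝ → ℝ} (ha : ∀ t, HasDerivAt a (α t) t) (ha0 : a 0 = 0) (hα : ∀ t, α t ≤ Λ)
    (haκ : ∀ t ∈ Set.Icc 0 t₀, a t ≤ κ)
    (hcont : ∀ i, Continuous (h i)) (hy : ∀ i t, HasDerivAt (y i) (h i t) t)
    (hbound : ∀ t ∈ Set.Icc 0 t₀, ∑ i ∈ Finset.range N, d i * |h i t + Λ * y i t| ≤
      (Λ - α t) * ∑ i ∈ Finset.range N, d i * |y i t| + ε) :
    (∑ i ∈ Finset.range N, d i * |y i t₀|) * Real.exp (a t₀) ≤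
      ∑ i ∈ Finset.range N, d i * |y i 0| + ε * Real.exp κ * t₀ := by
  have hyc : ∀ i, Continuous (y i) := fun i =>
    continuous_iff_continuousAt.2 fun t => (hy i t).continuousAt
  set G : ℝ → ℝ := fun t => ∑ i ∈ Finset.range N, d i * |y i t| with hG
  set b : ℝ → ℝ := fun t => Real.exp (Λ * t) * ∑ i ∈ Finset.range N, d i * |h i t + Λ * y i t|
    with hb
  have hbc : Continuous b := by fun_prop
  set w : ℝ → ℝ := fun t => G 0 + ∫ s in (0:ℝ)..t, b s with hw
  have hwd : ∀ t, HasDerivAt w (b t) t := fun t =>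
    (hbc.integral_hasStrictDerivAt 0 t).hasDerivAt.const_add _
  have hexp : ∀ t, HasDerivAt (fun t => Real.exp (Λ * t)) (Real.exp (Λ * t) * Λ) t := fun t => by
    simpa using ((hasDerivAt_id t).const_mul Λ).exp
  -- Duhamel's formula with damping `Λ`, summed over the coordinates
  have hduh : ∀ t, 0 ≤ t → Real.exp (Λ * t) * G t ≤ w t := by
    intro t ht
    have hi : ∀ i, Real.exp (Λ * t) * |y i t| ≤
        |y i 0| + ∫ s in (0:ℝ)..t, Real.exp (Λ * s) * |h i s + Λ * y i s| := by
      intro i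
      have hder : ∀ s ∈ Set.uIcc 0 t, HasDerivAt (fun s => Real.exp (Λ * s) * y i s)
          (Real.exp (Λ * s) * (h i s + Λ * y i s)) s := fun s _ =>
        ((hexp s).mul (hy i s)).congr_deriv (by ring)
      have hftc := intervalIntegral.integral_eq_sub_of_hasDerivAt hder
        (Continuous.intervalIntegrable (by have := hcont i; have := hyc i; fun_prop) _ _)
      have habs := intervalIntegral.abs_integral_le_integral_abs (μ := volume) ht
        (f := fun s => Real.exp (Λ * s) * (h i s + Λ * y i s))
      rw [hftc] at habs
      simp only [mul_zero, Real.exp_zero, one_mul, abs_mul, Real.abs_exp] at habs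
      have htri := abs_sub_abs_le_abs_sub (Real.exp (Λ * t) * y i t) (y i 0)
      rw [abs_mul, Real.abs_exp] at htri
      linarith
    have hsum : ∑ i ∈ Finset.range N, d i * (Real.exp (Λ * t) * |y i t|) ≤
        ∑ i ∈ Finset.range N, d i *
          (|y i 0| + ∫ s in (0:ℝ)..t, Real.exp (Λ * s) * |h i s + Λ * y i s|) :=
      Finset.sum_le_sum fun i _ => mul_le_mul_of_nonneg_left (hi i) (hd i)
    have e1 : Real.exp (Λ * t) * G t =
        ∑ i ∈ Finset.range N, d i * (Real.exp (Λ * t) * |y i t|) := by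
      rw [hG, Finset.mul_sum]; exact Finset.sum_congr rfl fun i _ => by ring
    have e2 : w t = ∑ i ∈ Finset.range N, d i *
          (|y i 0| + ∫ s in (0:ℝ)..t, Real.exp (Λ * s) * |h i s + Λ * y i s|) := by
      have : ∀ s, b s = ∑ i ∈ Finset.range N, d i * (Real.exp (Λ * s) * |h i s + Λ * y i s|) := by
        intro s
        simp only [hb]
        rw [Finset.mul_sum]; exact Finset.sum_congr rfl fun i _ => by ring
      simp only [hw, hG, this, mul_add, Finset.sum_add_distrib]
      rw [intervalIntegral.integral_finsetSum]
      · simp only [intervalIntegral.integral_const_mul]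
      · intro i _
        exact Continuous.intervalIntegrable (by have := hcont i; have := hyc i; fun_prop) _ _
    rw [e1, e2]; exact hsum
  have hWd : ∀ t, HasDerivAt (fun t => w t * Real.exp (a t - Λ * t))
      (b t * Real.exp (a t - Λ * t) + w t * (Real.exp (a t - Λ * t) * (α t - Λ))) t := fun t => by
    exact (hwd t).mul (((ha t).sub ((hasDerivAt_id t).const_mul Λ)).exp.congr_deriv
      (by simp))
  -- by `hduh` and `hbound`, `w exp (a - Λ t)` has derivative at most `ε exp a`
  have key : ∀ t ∈ Set.Icc 0 t₀,
      w t * Real.exp (a t - Λ * t) ≤ G 0 + ε * Real.exp κ * t := by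
    intro t ht
    refine image_le_of_deriv_right_le_deriv_boundary
      (f := fun t => w t * Real.exp (a t - Λ * t)) (a := 0) (b := t₀)
      (B := fun t => G 0 + ε * Real.exp κ * t) (B' := fun _ => ε * Real.exp κ)
      (fun s _ => (hWd s).continuousAt.continuousWithinAt)
      (fun s _ => (hWd s).hasDerivWithinAt) ?_ (by fun_prop)
      (fun s _ => ((hasDerivAt_id s).const_mul (ε * Real.exp κ) |>.const_add (G 0)
        |>.congr_deriv (by simp)).hasDerivWithinAt) ?_ ht
    · simp [hw, ha0]
    · intro s hs
      have hs' : s ∈ Set.Icc 0 t₀ := ⟨hs.1, hs.2.le⟩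
      have h1 := mul_le_mul_of_nonneg_left (hbound s hs') (Real.exp_pos (Λ * s)).le
      have h2 := mul_le_mul_of_nonneg_left (hduh s hs.1) (sub_nonneg.2 (hα s))
      have h3 : b s ≤ (Λ - α s) * w s + Real.exp (Λ * s) * ε := by
        simp only [hb]; simp only [hG] at h2; linarith
      have h4 := mul_le_mul_of_nonneg_right h3 (Real.exp_pos (a s - Λ * s)).le
      have h5 : Real.exp (Λ * s) * Real.exp (a s - Λ * s) = Real.exp (a s) := by
        rw [← Real.exp_add]; ring_nf
      have h6 : ε * Real.exp (a s) ≤ ε * Real.exp κ :=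
        mul_le_mul_of_nonneg_left (Real.exp_le_exp.2 (haκ s hs')) hε
      have h7 : ((Λ - α s) * w s + Real.exp (Λ * s) * ε) * Real.exp (a s - Λ * s) =
          (Λ - α s) * w s * Real.exp (a s - Λ * s) + ε * Real.exp (a s) := by
        rw [← h5]; ring
      rw [h7] at h4
      linarith
  refine le_trans ?_ (key t₀ ⟨ht₀, le_rfl⟩)
  have h1 := mul_le_mul_of_nonneg_right (hduh t₀ ht₀) (Real.exp_pos (a t₀ - Λ * t₀)).le
  have h5 : Real.exp (a t₀) = Real.exp (Λ * t₀) * Real.exp (a t₀ - Λ * t₀) := by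
    rw [← Real.exp_add]; ring_nf
  rw [h5]
  simp only [hG] at h1
  linarith

/-! ### Column sums of the tail system -/

/-- Summation by parts, using `1/(j - 1) - 1/j = 1/(j (j - 1))`, for
`Z n = ∑_{j ≥ n + 1} (1 + 1/j) (T j - T (j + 1))`; the last bracket is the remainder beyond the
truncation level. -/
theorem cata_abel {T Z : ℕ → ℝ}
    (hZ : ∀ n, Z n = (1 + 1 / ((n + 1 : ℕ) : ℝ)) * (T (n + 1) - T (n + 2)) + Z (n + 1))
    (n r : ℕ) : Z n = (1 + 1 / ((n + 1 : ℕ) : ℝ)) * T (n + 1) -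
      ∑ j ∈ Finset.Ioo n (n + r + 1), T (j + 1) / (((j + 1 : ℕ) : ℝ) * (j : ℝ)) +
      (Z (n + r + 1) - (1 + 1 / ((n + r + 1 : ℕ) : ℝ)) * T (n + r + 2)) := by
  induction r with
  | zero =>
    have : Finset.Ioo n (n + 0 + 1) = ∅ := by ext; simp
    rw [this, hZ n]; simp only [Finset.sum_empty, add_zero]
    ring
  | succ r ih =>
    have h1 : Finset.Ioo n (n + (r + 1) + 1) = insert (n + r + 1) (Finset.Ioo n (n + r + 1)) := by
      ext; simp; omega
    rw [h1, Finset.sum_insert (by simp), ih, hZ (n + r + 1)]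
    have e1 : n + (r + 1) + 1 = n + r + 2 := by omega
    have e2 : n + (r + 1) + 2 = n + r + 3 := by omega
    rw [e1, e2]
    have h2 : ((n + r + 1 : ℕ) : ℝ) ≠ 0 := by positivity
    have h3 : ((n + r + 1 + 1 : ℕ) : ℝ) ≠ 0 := by positivity
    have h4 : ((n + r + 1 + 1 : ℕ) : ℝ) = ((n + r + 1 : ℕ) : ℝ) + 1 := by push_cast; ring
    rw [show n + r + 2 = n + r + 1 + 1 from rfl]
    generalize ((n + r + 1 : ℕ) : ℝ) = u at *
    rw [h4] at h3 ⊢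
    field_simp
    ring

theorem sum_two_pow_lt (l N : ℕ) (hl : l ≤ N) :
    ∑ i ∈ Finset.range N, (if i < l then (2:ℝ) ^ i else 0) ≤ 2 ^ l := by
  rw [← Finset.sum_filter]
  have : (Finset.range N).filter (· < l) = Finset.range l := by ext; simp; omega
  rw [this, geom_sum_eq (by norm_num)]
  norm_num

/-- The logarithmic norm estimate. In the column of `T (j + 1)` the coefficients are: birth
`2 l - l`; service `min j S * m / 2 - min (j + 1) S * m ≤ -m`; catastrophes
`x / (j (j + 1)) - x (1 + 1/(j + 1)) ≤ -x`. The last term comes from the truncation at `N`. -/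
theorem weighted_bound {S : ℕ} (hS : 2 ≤ S) {l m x Λ δ : ℝ} (hl : 0 ≤ l) (hm : 0 ≤ m)
    (hx : 0 ≤ x) (hΛ : l + S * m + 2 * x ≤ Λ) {T Z h : ℕ → ℝ} (hT0 : T 0 = 0)
    (hZ : ∀ n, Z n = (1 + 1 / ((n + 1 : ℕ) : ℝ)) * (T (n + 1) - T (n + 2)) + Z (n + 1))
    (hh : ∀ n, h n = l * (T n - T (n + 1)) -
      ((min (n + 1) S : ℕ) : ℝ) * m * (T (n + 1) - T (n + 2)) - x * Z n)
    {N : ℕ} (hTN : |T (N + 1)| ≤ δ) (hZN : |Z N| ≤ δ) :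
    ∑ i ∈ Finset.range N, 2 ^ i * |h i + Λ * T (i + 1)| ≤
      (Λ - (m - l + x)) * ∑ i ∈ Finset.range N, 2 ^ i * |T (i + 1)| +
        2 ^ N * ((S * m + 3 * x) * δ) := by
  have hδ : 0 ≤ δ := (abs_nonneg _).trans hTN
  have hpt : ∀ i ∈ Finset.range N, |h i + Λ * T (i + 1)| ≤
      l * |T i| + ((min (i + 1) S : ℕ) : ℝ) * m * |T (i + 2)| +
      x * (∑ j ∈ Finset.range N, if i < j then |T (j + 1)| / (((j + 1 : ℕ) : ℝ) * (j : ℝ)) else 0) +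
      (Λ - l - ((min (i + 1) S : ℕ) : ℝ) * m - x * (1 + 1 / ((i + 1 : ℕ) : ℝ))) * |T (i + 1)| +
      3 * x * δ := by
    intro i hi
    rw [Finset.mem_range] at hi
    obtain ⟨r, rfl⟩ : ∃ r, N = i + r + 1 := ⟨N - i - 1, by omega⟩
    have hab := cata_abel hZ i r
    set Q := ∑ j ∈ Finset.Ioo i (i + r + 1), T (j + 1) / (((j + 1 : ℕ) : ℝ) * (j : ℝ)) with hQ
    set Q' := ∑ j ∈ Finset.range (i + r + 1),
      if i < j then |T (j + 1)| / (((j + 1 : ℕ) : ℝ) * (j : ℝ)) else 0 with hQ'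
    have hQQ : |Q| ≤ Q' := by
      rw [hQ, hQ', ← Finset.sum_filter]
      have : (Finset.range (i + r + 1)).filter (i < ·) = Finset.Ioo i (i + r + 1) := by
        ext; simp; omega
      rw [this]
      refine (Finset.abs_sum_le_sum_abs _ _).trans (Finset.sum_le_sum fun j _ => ?_)
      rw [abs_div, abs_of_nonneg (by positivity : (0:ℝ) ≤ ((j + 1 : ℕ) : ℝ) * (j : ℝ))]
    set ρ := Z (i + r + 1) - (1 + 1 / ((i + r + 1 : ℕ) : ℝ)) * T (i + r + 2) with hρ
    have hρb : |ρ| ≤ 3 * δ := by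
      have hz := zeta_bounds (i + r)
      have h1 : |(1 + 1 / ((i + r + 1 : ℕ) : ℝ)) * T (i + r + 2)| ≤ 2 * δ := by
        rw [abs_mul, abs_of_nonneg hz.1]
        exact mul_le_mul hz.2 hTN (abs_nonneg _) (by norm_num)
      have h2 := abs_sub (Z (i + r + 1)) ((1 + 1 / ((i + r + 1 : ℕ) : ℝ)) * T (i + r + 2))
      linarith
    set M := ((min (i + 1) S : ℕ) : ℝ) with hM
    have hMS : M ≤ S := by rw [hM]; exact_mod_cast min_le_right _ _
    have hM0 : 0 ≤ M := Nat.cast_nonneg _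
    have hz := zeta_bounds i
    set z := 1 + 1 / ((i + 1 : ℕ) : ℝ) with hzdef
    have hA : 0 ≤ Λ - l - M * m - x * z := by
      have := mul_le_mul_of_nonneg_right hMS hm
      have := mul_le_mul_of_nonneg_left hz.2 hx
      linarith
    have heq : h i + Λ * T (i + 1) = l * T i + M * m * T (i + 2) + x * Q +
        (Λ - l - M * m - x * z) * T (i + 1) - x * ρ := by
      rw [hh i, hab]; ring
    rw [heq]
    have t1 := abs_add_le (l * T i + M * m * T (i + 2) + x * Q +
        (Λ - l - M * m - x * z) * T (i + 1)) (-(x * ρ))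
    have t2 := abs_add_le (l * T i + M * m * T (i + 2) + x * Q)
        ((Λ - l - M * m - x * z) * T (i + 1))
    have t3 := abs_add_le (l * T i + M * m * T (i + 2)) (x * Q)
    have t4 := abs_add_le (l * T i) (M * m * T (i + 2))
    rw [abs_mul, abs_mul, abs_of_nonneg hl, abs_of_nonneg (mul_nonneg hM0 hm)] at t4
    rw [abs_mul x, abs_of_nonneg hx] at t3
    rw [abs_mul _ (T (i + 1)), abs_of_nonneg hA] at t2
    rw [abs_neg, abs_mul x, abs_of_nonneg hx, ← sub_eq_add_neg] at t1
    have t5 := mul_le_mul_of_nonneg_left hQQ hx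
    have t6 := mul_le_mul_of_nonneg_left hρb hx
    linarith
  -- The weighted birth and service sums are re-indexed so that every term carries `|T (i + 1)|`.
  have s1 : ∑ i ∈ Finset.range N, (2:ℝ) ^ i * |T i| ≤
      ∑ i ∈ Finset.range N, 2 ^ i * (2 * |T (i + 1)|) := by
    have e1 := Finset.sum_range_succ' (fun i => (2:ℝ) ^ i * |T i|) N
    rw [Finset.sum_range_succ, hT0] at e1
    have : (0:ℝ) ≤ 2 ^ N * |T N| := by positivity
    have e2 : ∑ i ∈ Finset.range N, (2:ℝ) ^ i * (2 * |T (i + 1)|) =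
        ∑ i ∈ Finset.range N, (2:ℝ) ^ (i + 1) * |T (i + 1)| :=
      Finset.sum_congr rfl fun i _ => by rw [pow_succ]; ring
    rw [e2]; simp at e1; linarith
  have s2 : ∑ i ∈ Finset.range N, (2:ℝ) ^ i * (((min (i + 1) S : ℕ) : ℝ) * |T (i + 2)|) ≤
      ∑ i ∈ Finset.range N, 2 ^ i * (((min i S : ℕ) : ℝ) / 2 * |T (i + 1)|) + 2 ^ N * (S * δ) := by
    have e1 := Finset.sum_range_succ'
      (fun i => (2:ℝ) ^ i * (((min i S : ℕ) : ℝ) / 2 * |T (i + 1)|)) N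
    rw [Finset.sum_range_succ] at e1
    have e2 : ∑ i ∈ Finset.range N, (2:ℝ) ^ i * (((min (i + 1) S : ℕ) : ℝ) * |T (i + 2)|) =
        ∑ i ∈ Finset.range N,
          (2:ℝ) ^ (i + 1) * (((min (i + 1) S : ℕ) : ℝ) / 2 * |T (i + 1 + 1)|) :=
      Finset.sum_congr rfl fun i _ => by rw [pow_succ]; ring
    have e3 : (2:ℝ) ^ N * (((min N S : ℕ) : ℝ) / 2 * |T (N + 1)|) ≤ 2 ^ N * (S * δ) := by
      refine mul_le_mul_of_nonneg_left (mul_le_mul ?_ hTN (abs_nonneg _) (by positivity))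
        (by positivity)
      have h1 : ((min N S : ℕ) : ℝ) ≤ S := by exact_mod_cast min_le_right _ _
      have h2 : (0:ℝ) ≤ S := by positivity
      linarith
    rw [e2]
    simp only [Nat.zero_min, Nat.cast_zero, zero_div, zero_mul, mul_zero, add_zero] at e1
    linarith
  have s3 : ∑ i ∈ Finset.range N, (2:ℝ) ^ i * (∑ j ∈ Finset.range N,
        if i < j then |T (j + 1)| / (((j + 1 : ℕ) : ℝ) * (j : ℝ)) else 0) ≤
      ∑ j ∈ Finset.range N, 2 ^ j * (|T (j + 1)| / (((j + 1 : ℕ) : ℝ) * (j : ℝ))) := by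
    simp only [Finset.mul_sum]
    rw [Finset.sum_comm]
    refine Finset.sum_le_sum fun j hj => ?_
    have e : ∑ i ∈ Finset.range N,
        (2:ℝ) ^ i * (if i < j then |T (j + 1)| / (((j + 1 : ℕ) : ℝ) * (j : ℝ)) else 0) =
        (∑ i ∈ Finset.range N, (if i < j then (2:ℝ) ^ i else 0)) *
          (|T (j + 1)| / (((j + 1 : ℕ) : ℝ) * (j : ℝ))) := by
      rw [Finset.sum_mul]
      refine Finset.sum_congr rfl fun i _ => ?_
      split_ifs <;> simp
    rw [e]
    exact mul_le_mul_of_nonneg_right (sum_two_pow_lt j N (Finset.mem_range.1 hj).le)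
      (by positivity)
  have s4 : ∑ i ∈ Finset.range N, (2:ℝ) ^ i * (3 * x * δ) ≤ 2 ^ N * (3 * x * δ) := by
    rw [← Finset.sum_mul]
    refine mul_le_mul_of_nonneg_right ?_ (by positivity)
    rw [geom_sum_eq (by norm_num)]; norm_num
  have hsum : ∑ i ∈ Finset.range N, 2 ^ i * |h i + Λ * T (i + 1)| ≤
      l * ∑ i ∈ Finset.range N, (2:ℝ) ^ i * |T i| +
      m * ∑ i ∈ Finset.range N, (2:ℝ) ^ i * (((min (i + 1) S : ℕ) : ℝ) * |T (i + 2)|) +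
      x * ∑ i ∈ Finset.range N, (2:ℝ) ^ i * (∑ j ∈ Finset.range N,
        if i < j then |T (j + 1)| / (((j + 1 : ℕ) : ℝ) * (j : ℝ)) else 0) +
      ∑ i ∈ Finset.range N, (2:ℝ) ^ i * ((Λ - l - ((min (i + 1) S : ℕ) : ℝ) * m -
        x * (1 + 1 / ((i + 1 : ℕ) : ℝ))) * |T (i + 1)|) +
      ∑ i ∈ Finset.range N, (2:ℝ) ^ i * (3 * x * δ) := by
    rw [Finset.mul_sum, Finset.mul_sum, Finset.mul_sum, ← Finset.sum_add_distrib,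
      ← Finset.sum_add_distrib, ← Finset.sum_add_distrib, ← Finset.sum_add_distrib]
    refine Finset.sum_le_sum fun i hi => ?_
    refine (mul_le_mul_of_nonneg_left (hpt i hi) (by positivity)).trans (le_of_eq ?_)
    ring
  -- comparison column by column
  have hcol : l * ∑ i ∈ Finset.range N, 2 ^ i * (2 * |T (i + 1)|) +
      m * ∑ i ∈ Finset.range N, (2:ℝ) ^ i * (((min i S : ℕ) : ℝ) / 2 * |T (i + 1)|) +
      x * ∑ j ∈ Finset.range N, (2:ℝ) ^ j * (|T (j + 1)| / (((j + 1 : ℕ) : ℝ) * (j : ℝ))) +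
      ∑ i ∈ Finset.range N, (2:ℝ) ^ i * ((Λ - l - ((min (i + 1) S : ℕ) : ℝ) * m -
        x * (1 + 1 / ((i + 1 : ℕ) : ℝ))) * |T (i + 1)|) ≤
      (Λ - (m - l + x)) * ∑ i ∈ Finset.range N, 2 ^ i * |T (i + 1)| := by
    rw [Finset.mul_sum, Finset.mul_sum, Finset.mul_sum, Finset.mul_sum,
      ← Finset.sum_add_distrib, ← Finset.sum_add_distrib, ← Finset.sum_add_distrib]
    refine Finset.sum_le_sum fun j _ => ?_
    have hw : (0:ℝ) ≤ 2 ^ j * |T (j + 1)| := by positivity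
    have hmin : ((min j S : ℕ) : ℝ) / 2 + 1 ≤ ((min (j + 1) S : ℕ) : ℝ) := by
      have : min j S + 2 ≤ 2 * min (j + 1) S := by omega
      have : ((min j S : ℕ) : ℝ) + 2 ≤ 2 * ((min (j + 1) S : ℕ) : ℝ) := by exact_mod_cast this
      linarith
    have hinv : 1 / (((j + 1 : ℕ) : ℝ) * (j : ℝ)) ≤ 1 / ((j + 1 : ℕ) : ℝ) := by
      rcases Nat.eq_zero_or_pos j with rfl | hj
      · simp
      · have hj' : (1:ℝ) ≤ j := by exact_mod_cast hj
        refine one_div_le_one_div_of_le (by positivity) ?_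
        exact le_mul_of_one_le_right (by positivity) hj'
    have c1 := mul_le_mul_of_nonneg_left hmin hm
    have c2 := mul_le_mul_of_nonneg_left hinv hx
    have c3 : l * 2 + m * (((min j S : ℕ) : ℝ) / 2) + x * (1 / (((j + 1 : ℕ) : ℝ) * (j : ℝ))) +
        (Λ - l - ((min (j + 1) S : ℕ) : ℝ) * m - x * (1 + 1 / ((j + 1 : ℕ) : ℝ))) ≤
        Λ - (m - l + x) := by linarith
    have c4 := mul_le_mul_of_nonneg_right c3 hw
    refine le_trans (le_of_eq ?_) c4
    ring
  have f1 := mul_le_mul_of_nonneg_left s1 hl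
  have f2 := mul_le_mul_of_nonneg_left s2 hm
  have f3 := mul_le_mul_of_nonneg_left s3 hx
  have : (2:ℝ) ^ N * ((S * m + 3 * x) * δ) =
      m * (2 ^ N * (S * δ)) + 2 ^ N * (3 * x * δ) := by ring
  rw [this]
  linarith

/-! ### Contraction of the tail differences -/

/-- The difference of the tails `∑_{i ≥ n}` of `p t` and `q t`, written with the complementary
finite sums; for vectors of equal mass the two agree. -/
def tailDiff (p q : ℝ → ℕ → ℝ) (n : ℕ) (t : ℝ) : ℝ :=
  ∑ i ∈ Finset.range n, q t i - ∑ i ∈ Finset.range n, p t i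

theorem tailDiff_sub (p q : ℝ → ℕ → ℝ) (n : ℕ) (t : ℝ) :
    tailDiff p q n t - tailDiff p q (n + 1) t = p t n - q t n := by
  simp only [tailDiff, Finset.sum_range_succ]; ring

theorem tailDiff_bound {l m x : ℝ → ℝ} (hr : MMSRates l m x) {S : ℕ} {p q : ℝ → ℕ → ℝ}
    (hp : IsKolSolution (mmsLam l) (mmsMu S m) (mmsXi (fun j => 1 + 1 / (j : ℝ)) x) p)
    (hq : IsKolSolution (mmsLam l) (mmsMu S m) (mmsXi (fun j => 1 + 1 / (j : ℝ)) x) q)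
    {k : ℕ} (hp0 : p 0 = eVec k) (hq0 : q 0 = eVec 0) (n : ℕ) {s t : ℝ} (hs : 0 ≤ s)
    (hst : s ≤ t) :
    |tailDiff p q n s| ≤ 3 ^ k * (1 / 3) ^ n * Real.exp (6 * t) ∧
    |cataTail (p s) n - cataTail (q s) n| ≤
      2 * (3 ^ k * (1 / 3) ^ (n + 1) * Real.exp (6 * t)) := by
  have hexp : Real.exp (6 * s) ≤ Real.exp (6 * t) := Real.exp_le_exp.2 (by linarith)
  have hP : ∀ n, 1 - ∑ i ∈ Finset.range n, p s i ≤ 3 ^ k * (1 / 3) ^ n * Real.exp (6 * t) :=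
    fun n => (tail_decay hr hp hp0 n hs).trans
      (mul_le_mul_of_nonneg_left hexp (by positivity))
  have hQ : ∀ n, 1 - ∑ i ∈ Finset.range n, q s i ≤ 3 ^ k * (1 / 3) ^ n * Real.exp (6 * t) := by
    intro n
    refine (tail_decay hr hq hq0 n hs).trans ?_
    have h3 : (1:ℝ) ≤ 3 ^ k := one_le_pow₀ (by norm_num)
    refine mul_le_mul ?_ hexp (Real.exp_pos _).le (by positivity)
    exact mul_le_mul_of_nonneg_right (by simpa using h3) (by positivity)
  have p0 := hp.nonneg s hs
  have q0 := hq.nonneg s hs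
  have p1 := hp.sum_one s hs
  have q1 := hq.sum_one s hs
  constructor
  · have h1 := tail_nonneg p0 p1 n
    have h2 := tail_nonneg q0 q1 n
    have h3 := hP n
    have h4 := hQ n
    rw [abs_le]; unfold tailDiff
    constructor <;> linarith
  · have h1 := cataTail_nonneg p0 n
    have h2 := cataTail_nonneg q0 n
    have h3 := cataTail_le p0 p1 n
    have h4 := cataTail_le q0 q1 n
    have h5 := hP (n + 1)
    have h6 := hQ (n + 1)
    rw [abs_le]
    constructor <;> linarith

theorem tailDiff_eqn {l m x : ℝ → ℝ} {S : ℕ} {p q : ℝ → ℕ → ℝ}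
    (hp : IsKolSolution (mmsLam l) (mmsMu S m) (mmsXi (fun j => 1 + 1 / (j : ℝ)) x) p)
    (hq : IsKolSolution (mmsLam l) (mmsMu S m) (mmsXi (fun j => 1 + 1 / (j : ℝ)) x) q)
    (n : ℕ) {t : ℝ} (ht : 0 ≤ t) :
    tailDiff p q (n + 1) t = tailDiff p q (n + 1) 0 + ∫ τ in (0:ℝ)..t,
      (l τ * (tailDiff p q n τ - tailDiff p q (n + 1) τ) -
        ((min (n + 1) S : ℕ) : ℝ) * m τ * (tailDiff p q (n + 1) τ - tailDiff p q (n + 2) τ) -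
        x τ * (cataTail (p τ) n - cataTail (q τ) n)) := by
  obtain ⟨ip, ep⟩ := sum_eqn hp ht n
  obtain ⟨iq, eq⟩ := sum_eqn hq ht n
  have := intervalIntegral.integral_sub iq ip
  simp only [tailDiff_sub]
  unfold tailDiff
  rw [ep, eq, add_sub_add_comm, ← this]
  congr 1
  refine intervalIntegral.integral_congr fun τ _ => ?_
  ring

/-- The truncated system at level `N` obeys `finite_gronwall` with a defect of order `(2/3) ^ N`;
then `N → ∞`. -/
theorem tailDiff_contraction {l m x : ℝ → ℝ} (hr : MMSRates l m x) {S : ℕ} (hS : 2 ≤ S)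
    {p q : ℝ → ℕ → ℝ}
    (hp : IsKolSolution (mmsLam l) (mmsMu S m) (mmsXi (fun j => 1 + 1 / (j : ℝ)) x) p)
    (hq : IsKolSolution (mmsLam l) (mmsMu S m) (mmsXi (fun j => 1 + 1 / (j : ℝ)) x) q)
    {k : ℕ} (hp0 : p 0 = eVec k) (hq0 : q 0 = eVec 0) {t : ℝ} (ht : 0 ≤ t) (M : ℕ) :
    ∑ i ∈ Finset.range M, 2 ^ i * |tailDiff p q (i + 1) t| ≤
      2 ^ k * Real.exp (-∫ τ in (0:ℝ)..t, (m τ - l τ + x τ)) := by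
  set α : ℝ → ℝ := fun τ => m τ - l τ + x τ with hα
  set a : ℝ → ℝ := fun t => ∫ τ in (0:ℝ)..t, α τ with ha
  have hαc : Continuous α := (hr.cont_m.sub hr.cont_l).add hr.cont_x
  have had : ∀ t, HasDerivAt a (α t) t := fun t =>
    (hαc.integral_hasStrictDerivAt 0 t).hasDerivAt
  have hα7 : ∀ t, α t ≤ 7 := fun t => by
    simp only [hα]
    linarith [hr.m_le t, hr.x_le t, hr.l_nonneg t]
  have haκ : ∀ s ∈ Set.Icc 0 t, a s ≤ 7 * t := by
    intro s hs
    have h1 : a s ≤ ∫ _ in (0:ℝ)..s, (7:ℝ) :=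
      intervalIntegral.integral_mono_on hs.1 (hαc.intervalIntegrable _ _)
        (by simp) fun τ _ => hα7 τ
    simp only [intervalIntegral.integral_const, sub_zero, smul_eq_mul] at h1
    linarith [hs.2]
  set Λ : ℝ := 2 + S * 5 + 2 * 2 with hΛ
  have hS0 : (2:ℝ) ≤ S := by exact_mod_cast hS
  set C : ℝ := 3 ^ k * Real.exp (6 * t) with hC
  have hC0 : 0 ≤ C := by positivity
  set h₀ : ℕ → ℝ → ℝ := fun n τ => l τ * (tailDiff p q n τ - tailDiff p q (n + 1) τ) -
        ((min (n + 1) S : ℕ) : ℝ) * m τ * (tailDiff p q (n + 1) τ - tailDiff p q (n + 2) τ) -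
        x τ * (cataTail (p τ) n - cataTail (q τ) n) with hh₀
  have hcont : ∀ n, ContinuousOn (h₀ n) (Set.Icc 0 t) := by
    intro n
    have c1 := continuousOn_coord hp ht
    have c2 := continuousOn_coord hq ht
    have c3 := continuousOn_cataTail hr hp hp0 ht n
    have c4 := continuousOn_cataTail hr hq hq0 ht n
    simp only [hh₀, tailDiff_sub]
    exact ((hr.cont_l.continuousOn.mul ((c1 n).sub (c2 n))).sub
      ((hr.cont_m.continuousOn.const_mul _).mul ((c1 (n + 1)).sub (c2 (n + 1))))).sub
      (hr.cont_x.continuousOn.mul (c3.sub c4))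
  -- a globally continuous extension of the right-hand sides, agreeing with them on `[0, t]`
  set h : ℕ → ℝ → ℝ := fun n => Set.IccExtend ht ((Set.Icc 0 t).domRestrict (h₀ n)) with hh
  have hhc : ∀ n, Continuous (h n) := fun n => (hcont n).domRestrict.Icc_extend'
  have hheq : ∀ n, ∀ s ∈ Set.Icc 0 t, h n s = h₀ n s := fun n s hs => by
    simp only [hh]
    rw [Set.IccExtend_of_mem ht _ hs]; rfl
  set y : ℕ → ℝ → ℝ := fun n s => tailDiff p q (n + 1) 0 + ∫ τ in (0:ℝ)..s, h n τ with hy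
  have hyd : ∀ n s, HasDerivAt (y n) (h n s) s := fun n s =>
    ((hhc n).integral_hasStrictDerivAt 0 s).hasDerivAt.const_add _
  have hyeq : ∀ n, ∀ s ∈ Set.Icc 0 t, y n s = tailDiff p q (n + 1) s := by
    intro n s hs
    rw [tailDiff_eqn hp hq n hs.1]
    simp only [hy]
    congr 1
    refine intervalIntegral.integral_congr fun τ hτ => ?_
    rw [Set.uIcc_of_le hs.1] at hτ
    exact hheq n τ ⟨hτ.1, hτ.2.trans hs.2⟩
  have h0mem : (0:ℝ) ∈ Set.Icc 0 t := ⟨le_rfl, ht⟩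
  have htmem : t ∈ Set.Icc 0 t := ⟨ht, le_rfl⟩
  have hfin : ∀ N, k ≤ N → (∑ i ∈ Finset.range N, 2 ^ i * |tailDiff p q (i + 1) t|) *
      Real.exp (a t) ≤
      2 ^ k + (S * 5 + 3 * 2) * C * Real.exp (7 * t) * t * (2 / 3) ^ N := by
    intro N hkN
    set δ : ℝ := 2 * (C * (1 / 3) ^ (N + 1)) with hδ
    have hδ0 : 0 ≤ δ := by positivity
    have hmain := finite_gronwall (Λ := Λ) (ε := 2 ^ N * ((S * 5 + 3 * 2) * δ)) (κ := 7 * t)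
      (N := N) (y := y) (h := h) (d := fun i => 2 ^ i) (a := a) (α := α) ht (by positivity)
      (fun i => by positivity) had (by simp [ha]) (fun s => (hα7 s).trans (by linarith)) haκ
      hhc hyd ?_
    · have e1 : ∑ i ∈ Finset.range N, (2:ℝ) ^ i * |y i t| =
          ∑ i ∈ Finset.range N, 2 ^ i * |tailDiff p q (i + 1) t| :=
        Finset.sum_congr rfl fun i _ => by rw [hyeq i t htmem]
      have e2 : ∑ i ∈ Finset.range N, (2:ℝ) ^ i * |y i 0| ≤ 2 ^ k := by
        refine le_trans (le_of_eq ?_) (sum_two_pow_lt k N hkN)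
        refine Finset.sum_congr rfl fun i _ => ?_
        rw [hyeq i 0 h0mem]
        simp only [tailDiff, hp0, hq0, sum_eVec]
        by_cases hik : i < k
        · simp [hik, show ¬ k < i + 1 by omega]
        · simp [hik, show k < i + 1 by omega]
      have e3 : 2 ^ N * ((S * 5 + 3 * 2) * δ) * Real.exp (7 * t) * t ≤
          (S * 5 + 3 * 2) * C * Real.exp (7 * t) * t * (2 / 3) ^ N := by
        have : (2 / 3 : ℝ) ^ N = 2 ^ N * (1 / 3) ^ N := by rw [← mul_pow]; norm_num
        rw [hδ, this, pow_succ]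
        have : 0 ≤ (S * 5 + 3 * 2) * C * Real.exp (7 * t) * t * (2 ^ N * (1 / 3) ^ N) := by
          positivity
        linarith
      rw [e1] at hmain
      linarith
    · intro s hs
      have hb := weighted_bound hS (l := l s) (m := m s) (x := x s) (Λ := Λ) (δ := δ)
        (hr.l_nonneg s) (hr.m_nonneg s) (hr.x_nonneg s)
        (by
          have := mul_le_mul_of_nonneg_left (hr.m_le s) (by positivity : (0:ℝ) ≤ S)
          linarith [hr.l_le s, hr.x_le s])
        (T := fun n => tailDiff p q n s)
        (Z := fun n => cataTail (p s) n - cataTail (q s) n) (h := fun n => h₀ n s)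
        (by simp [tailDiff])
        (fun n => by
          rw [tailDiff_sub, cataTail_succ (hp.nonneg s hs.1) (hp.sum_one s hs.1).summable n,
            cataTail_succ (hq.nonneg s hs.1) (hq.sum_one s hs.1).summable n]
          ring)
        (fun n => rfl) (N := N)
        (by
          refine (tailDiff_bound hr hp hq hp0 hq0 (N + 1) hs.1 hs.2).1.trans ?_
          have : 0 ≤ C * (1 / 3) ^ (N + 1) := by positivity
          rw [hδ]; simp only [hC] at this ⊢; linarith)
        (by
          refine (tailDiff_bound hr hp hq hp0 hq0 N hs.1 hs.2).2.trans (le_of_eq ?_)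
          rw [hδ, hC]; ring)
      have e1 : ∑ i ∈ Finset.range N, (2:ℝ) ^ i * |h i s + Λ * y i s| =
          ∑ i ∈ Finset.range N, 2 ^ i * |h₀ i s + Λ * tailDiff p q (i + 1) s| :=
        Finset.sum_congr rfl fun i _ => by rw [hyeq i s hs, hheq i s hs]
      have e2 : ∑ i ∈ Finset.range N, (2:ℝ) ^ i * |y i s| =
          ∑ i ∈ Finset.range N, 2 ^ i * |tailDiff p q (i + 1) s| :=
        Finset.sum_congr rfl fun i _ => by rw [hyeq i s hs]
      rw [e1, e2]
      refine hb.trans (add_le_add le_rfl ?_)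
      refine mul_le_mul_of_nonneg_left (mul_le_mul_of_nonneg_right ?_ hδ0) (by positivity)
      have := mul_le_mul_of_nonneg_left (hr.m_le s) (by positivity : (0:ℝ) ≤ S)
      linarith [hr.x_le s]
  have hlim : Tendsto (fun N : ℕ =>
      2 ^ k + (S * 5 + 3 * 2) * C * Real.exp (7 * t) * t * (2 / 3 : ℝ) ^ N) atTop
      (𝓝 (2 ^ k)) := by
    have := (tendsto_pow_atTop_nhds_zero_of_lt_one (r := (2 / 3 : ℝ)) (by norm_num)
      (by norm_num)).const_mul ((S * 5 + 3 * 2) * C * Real.exp (7 * t) * t)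
    simpa using this.const_add (2 ^ k)
  have hM : (∑ i ∈ Finset.range M, 2 ^ i * |tailDiff p q (i + 1) t|) * Real.exp (a t) ≤
      2 ^ k := by
    refine ge_of_tendsto hlim ?_
    filter_upwards [eventually_ge_atTop (max M k)] with N hN
    refine le_trans ?_ (hfin N ((le_max_right _ _).trans hN))
    refine mul_le_mul_of_nonneg_right ?_ (Real.exp_pos _).le
    exact Finset.sum_le_sum_of_subset_of_nonneg
      (Finset.range_mono ((le_max_left _ _).trans hN)) fun i _ _ => by positivity
  rw [Real.exp_neg, ← div_eq_mul_inv, le_div_iff₀ (Real.exp_pos _)]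
  exact hM

/-! ### From tails to norms and means -/

theorem l1_le_of_tail {a b T : ℕ → ℝ} {E : ℝ} (hT0 : T 0 = 0)
    (hT : ∀ n, T n - T (n + 1) = a n - b n)
    (h : ∀ M, ∑ i ∈ Finset.range M, 2 ^ i * |T (i + 1)| ≤ E) :
    ∑' i, |a i - b i| ≤ 4 * E := by
  have hE : 0 ≤ E := by simpa using h 0
  refine Real.tsum_le_of_sum_range_le (fun i => abs_nonneg _) fun M => ?_
  have h1 : ∑ i ∈ Finset.range M, |T (i + 1)| ≤ E := by
    refine le_trans (Finset.sum_le_sum fun i _ => ?_) (h M)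
    exact le_mul_of_one_le_left (abs_nonneg _) (one_le_pow₀ (by norm_num))
  have h2 : ∑ i ∈ Finset.range M, |T i| ≤ ∑ i ∈ Finset.range M, |T (i + 1)| := by
    have e1 := Finset.sum_range_succ' (fun i => |T i|) M
    rw [Finset.sum_range_succ, hT0, abs_zero, add_zero] at e1
    linarith [abs_nonneg (T M)]
  have h3 : ∑ i ∈ Finset.range M, |a i - b i| ≤
      ∑ i ∈ Finset.range M, (|T i| + |T (i + 1)|) :=
    Finset.sum_le_sum fun i _ => by rw [← hT]; exact abs_sub _ _
  rw [Finset.sum_add_distrib] at h3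
  linarith

theorem mean_le_of_tail {a b T : ℕ → ℝ} {E : ℝ} (hT : ∀ n, T n - T (n + 1) = a n - b n)
    (h : ∀ M, ∑ i ∈ Finset.range M, 2 ^ i * |T (i + 1)| ≤ E)
    (ha : Summable fun i : ℕ => (i : ℝ) * a i) (hb : Summable fun i : ℕ => (i : ℝ) * b i) :
    |∑' i : ℕ, (i : ℝ) * a i - ∑' i : ℕ, (i : ℝ) * b i| ≤ 4 * E := by
  have hE : 0 ≤ E := by simpa using h 0
  rw [← ha.tsum_sub hb]
  refine le_of_tendsto ((ha.sub hb).hasSum.tendsto_sum_nat.abs) (Eventually.of_forall fun M => ?_)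
  have habel : ∀ M : ℕ, ∑ i ∈ Finset.range M, ((i : ℝ) * a i - i * b i) =
      ∑ i ∈ Finset.range M, T (i + 1) - M * T M := by
    intro M
    induction M with
    | zero => simp
    | succ M ih =>
      rw [Finset.sum_range_succ, Finset.sum_range_succ, ih, ← mul_sub, ← hT]
      push_cast; ring
  rw [habel]
  have h1 : |∑ i ∈ Finset.range M, T (i + 1)| ≤ E := by
    refine (Finset.abs_sum_le_sum_abs _ _).trans
      (le_trans (Finset.sum_le_sum fun i _ => ?_) (h M))
    exact le_mul_of_one_le_left (abs_nonneg _) (one_le_pow₀ (by norm_num))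
  have h2 : |(M : ℝ) * T M| ≤ 2 * E := by
    rcases M with _ | M
    · simpa using hE
    · have h3 := h (M + 1)
      rw [Finset.sum_range_succ] at h3
      have h4 : 0 ≤ ∑ i ∈ Finset.range M, (2:ℝ) ^ i * |T (i + 1)| :=
        Finset.sum_nonneg fun i _ => by positivity
      have h5 : ((M + 1 : ℕ) : ℝ) ≤ 2 ^ (M + 1) := by
        exact_mod_cast (Nat.lt_two_pow_self (n := M + 1)).le
      rw [abs_mul, Nat.abs_cast]
      have h6 := mul_le_mul_of_nonneg_right h5 (abs_nonneg (T (M + 1)))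
      rw [pow_succ] at h6
      linarith
  have h3 := abs_sub (∑ i ∈ Finset.range M, T (i + 1)) ((M : ℝ) * T M)
  linarith

/-- The mean of a solution started at a point mass is finite, so `Emean` is not a junk value. -/
theorem summable_mean {l m x : ℝ → ℝ} (hr : MMSRates l m x) {S : ℕ} {p : ℝ → ℕ → ℝ}
    (hp : IsKolSolution (mmsLam l) (mmsMu S m) (mmsXi (fun j => 1 + 1 / (j : ℝ)) x) p)
    {k : ℕ} (hp0 : p 0 = eVec k) {t : ℝ} (ht : 0 ≤ t) :
    Summable fun i : ℕ => (i : ℝ) * p t i := by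
  have hg : Summable fun i : ℕ => (i : ℝ) * (1 / 3 : ℝ) ^ i := by
    simpa using summable_pow_mul_geometric_of_norm_lt_one 1
      (r := (1 / 3 : ℝ)) (by rw [Real.norm_eq_abs, abs_of_pos] <;> norm_num)
  refine (hg.mul_left (3 ^ k * Real.exp (6 * t))).of_nonneg_of_le
    (fun i => mul_nonneg (Nat.cast_nonneg _) (hp.nonneg t ht i)) fun i => ?_
  have h1 := (le_tail (hp.nonneg t ht) (hp.sum_one t ht) i).trans (tail_decay hr hp hp0 i ht)
  refine (mul_le_mul_of_nonneg_left h1 (Nat.cast_nonneg _)).trans (le_of_eq ?_)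
  ring

/-! ### The explicit exponent -/

theorem exponent_integral (t : ℝ) :
    ∫ τ in (0:ℝ)..t, (3 + 2 * Real.cos (2 * π * τ) - 2 * Real.sin (2 * π * τ)) =
      3 * t + (Real.sin (2 * π * t) + Real.cos (2 * π * t) - 1) / π := by
  have hd : ∀ τ ∈ Set.uIcc 0 t, HasDerivAt
      (fun τ => 3 * τ + (Real.sin (2 * π * τ) + Real.cos (2 * π * τ) - 1) / π)
      (3 + 2 * Real.cos (2 * π * τ) - 2 * Real.sin (2 * π * τ)) τ := by
    intro τ _
    have hlin : HasDerivAt (fun τ : ℝ => 2 * π * τ) (2 * π) τ := by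
      simpa using (hasDerivAt_id τ).const_mul (2 * π)
    have h3 : HasDerivAt (fun τ : ℝ => 3 * τ) 3 τ := by
      simpa using (hasDerivAt_id τ).const_mul (3 : ℝ)
    refine (h3.add (((hlin.sin.add hlin.cos).sub_const 1).div_const π)).congr_deriv ?_
    have := Real.pi_ne_zero
    field_simp
    ring
  rw [intervalIntegral.integral_eq_sub_of_hasDerivAt hd
    (Continuous.intervalIntegrable (by fun_prop) _ _)]
  simp

theorem exp_exponent_le (t : ℝ) :
    Real.exp (-∫ τ in (0:ℝ)..t, (3 + 2 * Real.cos (2 * π * τ) - 2 * Real.sin (2 * π * τ))) ≤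
      4 * Real.exp (-3 * t) := by
  rw [exponent_integral]
  have h1 : -1 ≤ (Real.sin (2 * π * t) + Real.cos (2 * π * t) - 1) / π := by
    rw [le_div_iff₀ Real.pi_pos]
    linarith [Real.neg_one_le_sin (2 * π * t), Real.neg_one_le_cos (2 * π * t), Real.pi_gt_three]
  have h2 : Real.exp 1 ≤ 4 := by linarith [Real.exp_one_lt_d9]
  calc _ ≤ Real.exp (1 + -3 * t) := Real.exp_le_exp.2 (by linarith)
    _ = Real.exp 1 * Real.exp (-3 * t) := Real.exp_add _ _
    _ ≤ _ := mul_le_mul_of_nonneg_right h2 (Real.exp_pos _).le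

/-- the example. For the `M_t|M_t|S` queue with catastrophes with
`S = 10^12`, `λ(t) = 1 + sin 2πt`, `μ(t) = 3 + 2 cos 2πt`, `ξ_k(t) = (1 + 1/k)(1 - sin 2πt)`:
for any `k`, the solutions `p*` with `p*(0) = e_k` and `p**` with `p**(0) = e_0` satisfy,
for all `t ≥ 0`,
`‖p*(t) - p**(t)‖ ≤ 2^{k+2} exp(-∫₀ᵗ (3 + 2cos 2πτ - 2sin 2πτ) dτ) ≤ 2^{k+4} e^{-3t}`,
and the same two bounds for `|E_k(t) - E_0(t)|`. -/
theorem mms_example_bounds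
    (k : ℕ) (p q : ℝ → ℕ → ℝ)
    (hp : IsKolSolution (mmsLam fun t => 1 + Real.sin (2 * π * t))
      (mmsMu (10 ^ 12) fun t => 3 + 2 * Real.cos (2 * π * t))
      (mmsXi (fun j => 1 + 1 / (j : ℝ)) fun t => 1 - Real.sin (2 * π * t)) p)
    (hq : IsKolSolution (mmsLam fun t => 1 + Real.sin (2 * π * t))
      (mmsMu (10 ^ 12) fun t => 3 + 2 * Real.cos (2 * π * t))
      (mmsXi (fun j => 1 + 1 / (j : ℝ)) fun t => 1 - Real.sin (2 * π * t)) q)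
    (hp0 : p 0 = eVec k) (hq0 : q 0 = eVec 0) :
    ∀ t : ℝ, 0 ≤ t →
      (∑' i : ℕ, |p t i - q t i|) ≤
          2 ^ (k + 2) * Real.exp (-∫ τ in (0:ℝ)..t,
            (3 + 2 * Real.cos (2 * π * τ) - 2 * Real.sin (2 * π * τ))) ∧
        |Emean p t - Emean q t| ≤
          2 ^ (k + 2) * Real.exp (-∫ τ in (0:ℝ)..t,
            (3 + 2 * Real.cos (2 * π * τ) - 2 * Real.sin (2 * π * τ))) ∧
        (2 : ℝ) ^ (k + 2) * Real.exp (-∫ τ in (0:ℝ)..t,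
            (3 + 2 * Real.cos (2 * π * τ) - 2 * Real.sin (2 * π * τ))) ≤
          2 ^ (k + 4) * Real.exp (-3 * t) := by
  intro t ht
  have hr : MMSRates (fun t => 1 + Real.sin (2 * π * t)) (fun t => 3 + 2 * Real.cos (2 * π * t))
      (fun t => 1 - Real.sin (2 * π * t)) :=
    { cont_l := by fun_prop
      cont_m := by fun_prop
      cont_x := by fun_prop
      l_nonneg := fun t => by linarith [Real.neg_one_le_sin (2 * π * t)]
      l_le := fun t => by linarith [Real.sin_le_one (2 * π * t)]
      m_nonneg := fun t => by linarith [Real.neg_one_le_cos (2 * π * t)]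
      m_le := fun t => by linarith [Real.cos_le_one (2 * π * t)]
      x_nonneg := fun t => by linarith [Real.sin_le_one (2 * π * t)]
      x_le := fun t => by linarith [Real.neg_one_le_sin (2 * π * t)] }
  have hrate : ∀ τ : ℝ, (3 + 2 * Real.cos (2 * π * τ)) - (1 + Real.sin (2 * π * τ)) +
      (1 - Real.sin (2 * π * τ)) =
      3 + 2 * Real.cos (2 * π * τ) - 2 * Real.sin (2 * π * τ) := fun τ => by ring
  have hc := tailDiff_contraction hr (by norm_num) hp hq hp0 hq0 ht
  simp only [hrate] at hc
  have h4 : ∀ E : ℝ, (2:ℝ) ^ (k + 2) * E = 4 * (2 ^ k * E) := fun E => by rw [pow_add]; ring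
  refine ⟨?_, ?_, ?_⟩
  · rw [h4]
    exact l1_le_of_tail (T := fun n => tailDiff p q n t) (by simp [tailDiff])
      (fun n => tailDiff_sub p q n t) hc
  · rw [h4]
    exact mean_le_of_tail (T := fun n => tailDiff p q n t) (fun n => tailDiff_sub p q n t) hc
      (summable_mean hr hp hp0 ht) (summable_mean hr hq hq0 ht)
  · have h := mul_le_mul_of_nonneg_left (exp_exponent_le t)
      (by positivity : (0:ℝ) ≤ 2 ^ (k + 2))
    refine h.trans (le_of_eq ?_)
    rw [pow_add 2 k 2, pow_add 2 k 4]; ring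
end
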